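/- arXiv:1708.01598 — 10 statements merged into one kernel-verified Lean document; each statement's English description precedes it below -/
import Mathlib

section
/- Let X be a strictly convex real normed space and f a motion of X. If there exists x ∈ X with ‖f(x)‖ ≤ ‖x‖ and ‖f(−x)‖ ≤ ‖x‖, then f(θ) = θ, i.e. the shift component of f is trivial. -/
/-!
The points `f x` and `f (-x)` are `2‖x‖` apart, so the closed balls of radius `‖x‖` around them are
tangent, and in a strictly convex space tangent balls meet in at most one point. Both `f 0` and `0`
lie in the intersection: the former because `f` is an isometry, the latter by the norm bounds.
-/

open Metric

theorem subsingleton_closedBall_inter_closedBall {V P : Type*} [NormedAddCommGroup V]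
    [NormedSpace ℝ V] [StrictConvexSpace ℝ V] [PseudoMetricSpace P] [NormedAddTorsor V P] {a b : P}
    {r s : ℝ} (h : r + s ≤ dist a b) : (closedBall a r ∩ closedBall b s).Subsingleton := by
  rintro y ⟨hya, hyb⟩ z ⟨hza, hzb⟩
  by_contra hyz
  have hm : Sbtw ℝ y (midpoint ℝ y z) z := sbtw_midpoint_of_ne ℝ hyz
  have hma : dist (midpoint ℝ y z) a < r := (hm.dist_lt_max_dist a).trans_le (max_le hya hza)
  have hmb : dist (midpoint ℝ y z) b ≤ s := (hm.wbtw.dist_le_max_dist b).trans (max_le hyb hzb)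
  exact (h.trans (dist_triangle_left a b (midpoint ℝ y z))).not_gt (add_lt_add_of_lt_of_le hma hmb)

theorem map_midpoint_eq_of_dist_le_half {V W P Q : Type*} [SeminormedAddCommGroup V]
    [NormedSpace ℝ V] [PseudoMetricSpace P] [NormedAddTorsor V P] [NormedAddCommGroup W]
    [NormedSpace ℝ W] [StrictConvexSpace ℝ W] [PseudoMetricSpace Q] [NormedAddTorsor W Q]
    {f : P → Q} (hf : Isometry f) {p q : P} {c : Q}
    (hp : dist c (f p) ≤ dist p q / 2) (hq : dist c (f q) ≤ dist p q / 2) :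
    f (midpoint ℝ p q) = c := by
  have tangent : dist p q / 2 + dist p q / 2 ≤ dist (f p) (f q) := by
    rw [hf.dist_eq, add_halves]
  refine subsingleton_closedBall_inter_closedBall tangent ⟨?_, ?_⟩ ⟨hp, hq⟩ <;>
    simp [hf.dist_eq, div_eq_inv_mul]

theorem motion_trivial_shift_general {E F : Type*} [SeminormedAddCommGroup E] [NormedSpace ℝ E]
    [NormedAddCommGroup F] [NormedSpace ℝ F] [StrictConvexSpace ℝ F] {f : E → F} (hf : Isometry f)
    {x : E} (hx : ‖f x‖ ≤ ‖x‖) (hx_neg : ‖f (-x)‖ ≤ ‖x‖) : f 0 = 0 := by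
  have half_dist : dist x (-x) / 2 = ‖x‖ := by
    rw [dist_eq_norm, sub_neg_eq_add, ← two_smul ℝ x, norm_smul, Real.norm_two,
      mul_div_cancel_left₀ _ two_ne_zero]
  rw [← midpoint_self_neg (R := ℝ) x]
  apply map_midpoint_eq_of_dist_le_half hf <;> rwa [half_dist, dist_zero_left]

/-- Let `X` be a strictly convex real normed space and `f` a motion of `X`.
If there exists `x` with `‖f x‖ ≤ ‖x‖` and `‖f (-x)‖ ≤ ‖x‖`, then `f θ = θ`. -/
theorem motion_trivial_shift
    {X : Type*} [NormedAddCommGroup X] [NormedSpace ℝ X]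
    (hNCS : ∀ x y : X, x ≠ y → ‖x‖ = 1 → ‖y‖ = 1 →
      ∀ l : ℝ, 0 < l → l < 1 → ‖l • x + (1 - l) • y‖ < 1)
    (f : X → X) (hf_surj : Function.Surjective f)
    (hf_iso : ∀ x y : X, ‖f x - f y‖ = ‖x - y‖)
    (x : X) (h1 : ‖f x‖ ≤ ‖x‖) (h2 : ‖f (-x)‖ ≤ ‖x‖) :
    f 0 = 0 := by
  have : StrictConvexSpace ℝ X := .of_norm_combo_lt_one fun u v hu hv huv =>
    ⟨1 / 2, 1 - 1 / 2, by norm_num, hNCS u v huv hu hv _ one_half_pos one_half_lt_one⟩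
  have hf : Isometry f := .of_dist_eq fun u v => by simp only [dist_eq_norm, hf_iso]
  exact motion_trivial_shift_general hf h1 h2
end

section
/- Let X be a real normed space containing m linearly independent vectors (m ∈ ℕ, m ≥ 1), and let r > 0. If the sphere S(θ,r) = {x ∈ X : ‖x‖ = r} is the union of m closed sets A₁, …, A_m, then there exist an index i₀ and a point x with ‖x‖ = r such that both x and −x belong to A_{i₀}. -/
/-!
The upper hemispheres of an octahedral sphere are built inductively by contracting the previous
hemisphere and its antipode to a new vertex. Whenever mod 2 functions `eᵢ` of the points change
under the antipodal map, Stokes' theorem shows by descent on the dimension that the cochain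
`δe₀ ∪ ⋯ ∪ δeₙ₋₁` takes the value `1` on the `n`-dimensional hemisphere. Taking for `eᵢ` the sign of
`fᵢ(x) - fᵢ(-x)` and fine hemispheres, this yields small simplices on which every such difference
changes sign, and hence the Borsuk–Ulam theorem. The covering theorem follows by applying it to the
distances to all but one of the closed sets.
-/

/-- Mod 2 chains of ordered simplices, a simplex being the list of its vertices. Lists may repeat
vertices, and the empty list is the simplex of dimension `-1`, so the complex is augmented. -/
abbrev OrderedChain (X : Type*) := List X →₀ ZMod 2

namespace OrderedChain

variable {X Y : Type*}

/-- The chain consisting of a single simplex. -/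
noncomputable def simplex (l : List X) : OrderedChain X := Finsupp.single l 1

/-- The cone operator, joining the apex `b` to every simplex as its first vertex. -/
noncomputable def cone (b : X) : OrderedChain X →ₗ[ZMod 2] OrderedChain X :=
  Finsupp.lmapDomain (ZMod 2) (ZMod 2) (List.cons b)

/-- The pushforward of chains along a map of the vertices. -/
noncomputable def map (f : X → Y) : OrderedChain X →ₗ[ZMod 2] OrderedChain Y :=
  Finsupp.lmapDomain (ZMod 2) (ZMod 2) (List.map f)

/-- The value of a mod 2 cochain on a chain. -/
noncomputable def eval (φ : List X → ZMod 2) : OrderedChain X →ₗ[ZMod 2] ZMod 2 :=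
  Finsupp.linearCombination (ZMod 2) φ

@[simp]
lemma cone_simplex (b : X) (l : List X) : cone b (simplex l) = simplex (b :: l) := by
  simp [cone, simplex]

@[simp]
lemma map_simplex (f : X → Y) (l : List X) : map f (simplex l) = simplex (l.map f) := by
  simp [map, simplex]

@[simp]
lemma eval_simplex (φ : List X → ZMod 2) (l : List X) : eval φ (simplex l) = φ l := by
  simp [eval, simplex]

lemma linearMap_ext {M : Type*} [AddCommGroup M] [Module (ZMod 2) M]
    {S T : OrderedChain X →ₗ[ZMod 2] M} (h : ∀ l, S (simplex l) = T (simplex l)) : S = T :=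
  Finsupp.lhom_ext' fun l ↦ LinearMap.ext_ring (h l)

lemma induction_on_cone {p : OrderedChain X → Prop} (c : OrderedChain X)
    (nil : p (simplex [])) (cone : ∀ x c, p c → p (cone x c))
    (add : ∀ c c', p c → p c' → p (c + c')) : p c := by
  have simplex_mem : ∀ l : List X, p (simplex l) := fun l ↦ by
    induction l with
    | nil => exact nil
    | cons x l ih => simpa only [cone_simplex] using cone x _ ih
  induction c using Finsupp.induction_linear with
  | zero => simpa only [ZModModule.add_self] using add _ _ nil nil
  | add c c' hc hc' => exact add c c' hc hc'
  | single l a =>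
    obtain rfl | rfl : a = 0 ∨ a = 1 := by revert a; decide
    · simpa only [Finsupp.single_zero, ZModModule.add_self] using add _ _ nil nil
    · exact simplex_mem l

/-- The sum of the faces of a simplex, each omitting one vertex; the boundary on generators. -/
noncomputable def faceSum : List X → OrderedChain X
  | [] => 0
  | x :: l => simplex l + cone x (faceSum l)

/-- The boundary operator of the augmented complex. -/
noncomputable def boundary : OrderedChain X →ₗ[ZMod 2] OrderedChain X :=
  Finsupp.linearCombination (ZMod 2) faceSum

@[simp]
lemma boundary_simplex (l : List X) : boundary (simplex l) = faceSum l := by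
  simp [boundary, simplex]

@[simp]
lemma faceSum_nil : faceSum ([] : List X) = 0 := rfl

lemma boundary_cone (b : X) (c : OrderedChain X) :
    boundary (cone b c) = c + cone b (boundary c) := by
  have h : boundary ∘ₗ cone b = LinearMap.id + cone b ∘ₗ boundary := linearMap_ext fun l ↦ by
    simp [faceSum]
  exact LinearMap.congr_fun h c

@[simp]
lemma map_cone (f : X → Y) (b : X) (c : OrderedChain X) :
    map f (cone b c) = cone (f b) (map f c) := by
  have h : map f ∘ₗ cone b = cone (f b) ∘ₗ map f := linearMap_ext fun l ↦ by simp
  exact LinearMap.congr_fun h c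

lemma boundary_map (f : X → Y) (c : OrderedChain X) :
    boundary (map f c) = map f (boundary c) := by
  induction c using induction_on_cone with
  | nil => simp
  | cone x c ih => simp [boundary_cone, ih]
  | add c c' hc hc' => simp [hc, hc']

@[simp]
lemma map_id (c : OrderedChain X) : map id c = c := by
  simp [map]

lemma map_map_of_involutive {f : X → X} (hf : f.Involutive) (c : OrderedChain X) :
    map f (map f c) = c := by
  induction c using induction_on_cone with
  | nil => simp
  | cone x c ih => simp [ih, hf x]
  | add c c' hc hc' => simp [hc, hc']

/-- The prism over a simplex: the sum of the simplices `[f x₀, …, f xᵢ, g xᵢ, …, g xₙ]`. -/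
noncomputable def prismSum (f g : X → Y) : List X → OrderedChain Y
  | [] => 0
  | x :: l => simplex (f x :: g x :: l.map g) + cone (f x) (prismSum f g l)

/-- The prism operator, a chain homotopy between the pushforwards along `f` and `g`. -/
noncomputable def prism (f g : X → Y) : OrderedChain X →ₗ[ZMod 2] OrderedChain Y :=
  Finsupp.linearCombination (ZMod 2) (prismSum f g)

@[simp]
lemma prism_simplex (f g : X → Y) (l : List X) : prism f g (simplex l) = prismSum f g l := by
  simp [prism, simplex]

lemma prism_cone (f g : X → Y) (x : X) (c : OrderedChain X) :
    prism f g (cone x c) = cone (f x) (cone (g x) (map g c) + prism f g c) := by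
  have h : prism f g ∘ₗ cone x = cone (f x) ∘ₗ (cone (g x) ∘ₗ map g + prism f g) :=
    linearMap_ext fun l ↦ by simp [prismSum]
  exact LinearMap.congr_fun h c

lemma boundary_prism (f g : X → Y) (c : OrderedChain X) :
    boundary (prism f g c) + prism f g (boundary c) = map g c + map f c := by
  induction c using induction_on_cone with
  | nil => simp [prismSum, ZModModule.add_self]
  | cone x c ih =>
    have ih' := congr(cone (f x) $ih)
    simp only [prism_cone, boundary_cone, map_add, map_cone, boundary_map] at ih' ⊢
    linear_combination (norm := module) ih' + ZModModule.add_self (prism f g c) +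
      ZModModule.add_self (cone (f x) (map g c)) +
      ZModModule.add_self (cone (f x) (cone (g x) (map g (boundary c))))
  | add c c' hc hc' =>
    simp only [map_add]
    linear_combination (norm := module) hc + hc'

/-- The value of the cochain `δe₀ ∪ ⋯ ∪ δeₙ₋₁` on an `n`-simplex, for mod 2 functions `eᵢ` of the
vertices. It represents the top cup power of the class classifying the antipodal double cover. -/
def cupCoboundary : (ℕ → X → ZMod 2) → List X → ZMod 2
  | _, [] => 0
  | _, [_] => 1
  | e, x :: y :: l => (e 0 x + e 0 y) * cupCoboundary (fun i ↦ e (i + 1)) (y :: l)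

/-- The value of the cochain `δe₀ ∪ ⋯ ∪ δeₙ₋₁ ∪ eₙ` on an `n`-simplex. -/
def cupPrimitive : (ℕ → X → ZMod 2) → List X → ZMod 2
  | _, [] => 1
  | e, [x] => e 0 x
  | e, x :: y :: l => (e 0 x + e 0 y) * cupPrimitive (fun i ↦ e (i + 1)) (y :: l)

lemma cupPrimitive_cons_add_cupPrimitive_cons (e : ℕ → X → ZMod 2) (x y : X) (l : List X) :
    cupPrimitive e (x :: l) + cupPrimitive e (y :: l) =
      (e 0 x + e 0 y) * cupPrimitive (fun i ↦ e (i + 1)) l := by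
  cases l with
  | nil => simp [cupPrimitive]
  | cons z l =>
    simp only [cupPrimitive]
    linear_combination CharTwo.add_self_eq_zero (e 0 z) * cupPrimitive (fun i ↦ e (i + 1)) (z :: l)

lemma eval_cupPrimitive_cone_cone (e : ℕ → X → ZMod 2) (x y : X) (c : OrderedChain X) :
    eval (cupPrimitive e) (cone x (cone y c)) =
      (e 0 x + e 0 y) * eval (cupPrimitive fun i ↦ e (i + 1)) (cone y c) := by
  have h : eval (cupPrimitive e) ∘ₗ cone x ∘ₗ cone y =
      (e 0 x + e 0 y) • eval (cupPrimitive fun i ↦ e (i + 1)) ∘ₗ cone y :=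
    linearMap_ext fun l ↦ by simp [cupPrimitive]
  exact LinearMap.congr_fun h c

lemma eval_cupPrimitive_faceSum (e : ℕ → X → ZMod 2) (l : List X) :
    eval (cupPrimitive e) (faceSum l) = cupCoboundary e l := by
  induction l generalizing e with
  | nil => simp [faceSum, cupCoboundary]
  | cons x l ih =>
    cases l with
    | nil => simp [faceSum, cupCoboundary, cupPrimitive]
    | cons y l =>
      rw [cupCoboundary, ← ih]
      simp only [faceSum, map_add, cone_simplex, eval_simplex, eval_cupPrimitive_cone_cone,
        ← add_assoc, cupPrimitive_cons_add_cupPrimitive_cons]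
      ring

lemma eval_cupPrimitive_boundary (e : ℕ → X → ZMod 2) (c : OrderedChain X) :
    eval (cupPrimitive e) (boundary c) = eval (cupCoboundary e) c := by
  have h : eval (cupPrimitive e) ∘ₗ boundary = eval (cupCoboundary e) := linearMap_ext fun l ↦ by
    simp [eval_cupPrimitive_faceSum]
  exact LinearMap.congr_fun h c

lemma cupPrimitive_add_cupPrimitive_map (e : ℕ → X → ZMod 2) {f : X → X} {l : List X}
    (h : ∀ i, ∀ x ∈ l, e i (f x) = e i x + 1) :
    cupPrimitive e l + cupPrimitive e (l.map f) = cupCoboundary e l := by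
  induction l generalizing e with
  | nil => simpa only [List.map_nil, cupPrimitive, cupCoboundary] using CharTwo.add_self_eq_zero 1
  | cons x l ih =>
    cases l with
    | nil =>
      simp only [List.map_cons, List.map_nil, cupPrimitive, cupCoboundary, h 0 x (by simp)]
      linear_combination CharTwo.add_self_eq_zero (e 0 x)
    | cons y l =>
      have ih' := ih (fun i ↦ e (i + 1)) fun i z hz ↦ h (i + 1) z (List.mem_cons_of_mem x hz)
      simp only [List.map_cons, cupPrimitive, cupCoboundary] at ih' ⊢
      rw [h 0 x (by simp), h 0 y (by simp), ← ih']
      linear_combination CharTwo.add_self_eq_zero (1 : ZMod 2) *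
        cupPrimitive (fun i ↦ e (i + 1)) (f y :: l.map f)

lemma exists_ne_of_cupCoboundary_ne_zero {e : ℕ → X → ZMod 2} {l : List X}
    (h : cupCoboundary e l ≠ 0) {i : ℕ} (hi : i + 1 < l.length) :
    ∃ x ∈ l, ∃ y ∈ l, e i x ≠ e i y := by
  induction l generalizing e i with
  | nil => simp at hi
  | cons x l ih =>
    cases l with
    | nil => simp at hi
    | cons y l =>
      obtain ⟨hxy, hl⟩ := mul_ne_zero_iff.1 h
      cases i with
      | zero => exact ⟨x, by simp, y, by simp, fun hxy' ↦ hxy <| by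
          rw [hxy', CharTwo.add_self_eq_zero]⟩
      | succ i =>
        obtain ⟨z, hz, w, hw, hzw⟩ := ih hl (by simpa using hi)
        exact ⟨z, List.mem_cons_of_mem x hz, w, List.mem_cons_of_mem x hw, hzw⟩

/-- The chains all of whose simplices lie in `S`. -/
abbrev supportedIn (S : Set (List X)) : Submodule (ZMod 2) (OrderedChain X) :=
  Finsupp.supported (ZMod 2) (ZMod 2) S

lemma simplex_mem_supportedIn {S : Set (List X)} {l : List X} (hl : l ∈ S) :
    simplex l ∈ supportedIn S :=
  Finsupp.single_mem_supported _ _ hl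

lemma apply_mem_of_mem_supportedIn {M : Type*} [AddCommGroup M] [Module (ZMod 2) M]
    {T : OrderedChain X →ₗ[ZMod 2] M} {S : Set (List X)} {p : Submodule (ZMod 2) M}
    (hT : ∀ l ∈ S, T (simplex l) ∈ p) {c : OrderedChain X} (hc : c ∈ supportedIn S) :
    T c ∈ p := by
  rw [supportedIn, Finsupp.supported_eq_span_single] at hc
  exact (Submodule.span_le (p := p.comap T)).2 (Set.image_subset_iff.2 hT) hc

lemma exists_ne_zero_of_eval_ne_zero {φ : List X → ZMod 2} {S : Set (List X)}
    {c : OrderedChain X} (hc : c ∈ supportedIn S) (h : eval φ c ≠ 0) : ∃ l ∈ S, φ l ≠ 0 := by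
  by_contra! hφ
  exact h <| apply_mem_of_mem_supportedIn (p := ⊥) (by simpa using hφ) hc

lemma eval_cupPrimitive_add_map (e : ℕ → X → ZMod 2) {f : X → X} {c : OrderedChain X}
    (hc : c ∈ supportedIn {l | ∀ x ∈ l, ∀ i, e i (f x) = e i x + 1}) :
    eval (cupPrimitive e) (c + map f c) = eval (cupCoboundary e) c := by
  let T := eval (cupPrimitive e) ∘ₗ (LinearMap.id + map f) - eval (cupCoboundary e)
  have hT : T c ∈ (⊥ : Submodule (ZMod 2) (ZMod 2)) :=
    apply_mem_of_mem_supportedIn (fun l hl ↦ by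
      simp [T, ← cupPrimitive_add_cupPrimitive_map e fun i x hx ↦ hl x hx i]) hc
  exact sub_eq_zero.1 hT

lemma prismSum_mem_supportedIn (f g : X → Y) (l : List X) :
    prismSum f g l ∈
      supportedIn {l' | l'.length = l.length + 1 ∧ ∀ y ∈ l', ∃ x ∈ l, y = f x ∨ y = g x} := by
  induction l with
  | nil => exact Submodule.zero_mem _
  | cons x l ih =>
    refine Submodule.add_mem _ (simplex_mem_supportedIn ⟨by simp, fun y hy ↦ ?_⟩)
      (apply_mem_of_mem_supportedIn ?_ ih)
    · simp only [List.mem_cons, List.mem_map] at hy ⊢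
      grind
    · rintro l' ⟨hlen, hl'⟩
      rw [cone_simplex]
      refine simplex_mem_supportedIn ⟨by simp [hlen], fun y hy ↦ ?_⟩
      obtain rfl | hy := List.mem_cons.1 hy
      · exact ⟨x, by simp, .inl rfl⟩
      · obtain ⟨z, hz, hyz⟩ := hl' y hy
        exact ⟨z, List.mem_cons_of_mem x hz, hyz⟩

section Contraction

variable {E : Type*} [AddCommGroup E] [Module ℝ E]

/-- The filling of a cycle `c` obtained by pushing it along segments to the point `b` in `N` steps
and coning off the result. For `N = 0` it is the plain cone. -/
noncomputable def contract (b : E) (N : ℕ) : OrderedChain E →ₗ[ZMod 2] OrderedChain E :=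
  ∑ j ∈ Finset.range N,
      prism (fun x ↦ AffineMap.lineMap x b (j / N : ℝ))
        (fun x ↦ AffineMap.lineMap x b ((j + 1 : ℕ) / N : ℝ)) +
    cone b ∘ₗ map fun x ↦ AffineMap.lineMap x b (N / N : ℝ)

lemma boundary_contract (b : E) (N : ℕ) {c : OrderedChain E} (hc : boundary c = 0) :
    boundary (contract b N c) = c := by
  let push (j : ℕ) : OrderedChain E := map (fun x ↦ AffineMap.lineMap x b (j / N : ℝ)) c
  have boundary_step (j : ℕ) : boundary (prism (fun x ↦ AffineMap.lineMap x b (j / N : ℝ))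
      (fun x ↦ AffineMap.lineMap x b ((j + 1 : ℕ) / N : ℝ)) c) = push (j + 1) - push j := by
    rw [ZModModule.sub_eq_add]
    simpa only [hc, map_zero, add_zero] using boundary_prism _ _ c
  have push_zero : push 0 = c := by
    have : (fun x ↦ AffineMap.lineMap x b (((0 : ℕ) : ℝ) / N)) = (id : E → E) := by ext x; simp
    simp only [push, this, map_id]
  calc boundary (contract b N c)
      = (push N - push 0) + push N := by
        simp only [contract, LinearMap.add_apply, LinearMap.sum_apply, LinearMap.comp_apply,
          map_add, map_sum, boundary_step, Finset.sum_range_sub, boundary_cone, boundary_map, hc,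
          map_zero, add_zero]
        rfl
    _ = c := by rw [push_zero, ZModModule.sub_eq_add, add_right_comm, ZModModule.add_self, zero_add]

/-- The upper hemisphere of dimension `k` of the octahedral sphere with vertices `±vᵢ`, cut into
small simplices as `N` grows: it fills the `(k - 1)`-sphere formed by the upper hemisphere of
dimension `k - 1` and its antipode. -/
noncomputable def hemisphere (v : ℕ → E) (N : ℕ) : ℕ → OrderedChain E
  | 0 => simplex [v 0]
  | k + 1 => contract (v (k + 1)) N (hemisphere v N k + map Neg.neg (hemisphere v N k))

lemma boundary_hemisphere_add_map_neg (v : ℕ → E) (N k : ℕ) :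
    boundary (hemisphere v N k + map Neg.neg (hemisphere v N k)) = 0 := by
  induction k with
  | zero => simp [hemisphere, faceSum, ZModModule.add_self]
  | succ k ih =>
    rw [map_add, boundary_map, hemisphere, boundary_contract _ _ ih, map_add,
      map_map_of_involutive neg_involutive, add_comm (map _ _), ZModModule.add_self]

lemma boundary_hemisphere_succ (v : ℕ → E) (N k : ℕ) :
    boundary (hemisphere v N (k + 1)) = hemisphere v N k + map Neg.neg (hemisphere v N k) :=
  boundary_contract _ _ (boundary_hemisphere_add_map_neg v N k)

/-- Each step lowers the dimension by Stokes' theorem and the oddness of the labels. -/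
lemma eval_cupCoboundary_hemisphere (v : ℕ → E) (N : ℕ) (e : ℕ → E → ZMod 2) (k : ℕ)
    (he : ∀ j < k, hemisphere v N j ∈ supportedIn {l | ∀ x ∈ l, ∀ i, e i (-x) = e i x + 1}) :
    eval (cupCoboundary e) (hemisphere v N k) = 1 := by
  induction k with
  | zero => simp [hemisphere, cupCoboundary]
  | succ k ih =>
    rw [← eval_cupPrimitive_boundary, boundary_hemisphere_succ,
      eval_cupPrimitive_add_map e (he k k.lt_succ_self)]
    exact ih fun j hj ↦ he j (hj.trans k.lt_succ_self)

end Contraction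

section SmallSimplices

/-- The simplices with `n` vertices, all in `K` and pairwise at distance at most `ε`. -/
def smallSimplices [PseudoMetricSpace X] (K : Set X) (n : ℕ) (ε : ℝ) : Set (List X) :=
  {l | l.length = n ∧ (∀ x ∈ l, x ∈ K) ∧ ∀ x ∈ l, ∀ y ∈ l, dist x y ≤ ε}

variable [PseudoMetricSpace X] [PseudoMetricSpace Y] {K : Set X} {K' : Set Y} {n : ℕ} {ε ε' : ℝ}

lemma map_mem_smallSimplices {f : X → Y} (hK : Set.MapsTo f K K')
    (hf : ∀ x ∈ K, ∀ y ∈ K, dist x y ≤ ε → dist (f x) (f y) ≤ ε') {c : OrderedChain X}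
    (hc : c ∈ supportedIn (smallSimplices K n ε)) :
    map f c ∈ supportedIn (smallSimplices K' n ε') := by
  refine apply_mem_of_mem_supportedIn ?_ hc
  rintro l ⟨hlen, hlK, hdist⟩
  rw [map_simplex]
  refine simplex_mem_supportedIn ⟨by simpa using hlen, ?_, ?_⟩
  · simpa using fun x hx ↦ hK (hlK x hx)
  · simpa using fun x hx y hy ↦ hf x (hlK x hx) y (hlK y hy) (hdist x hx y hy)

lemma prism_mem_smallSimplices {f g : X → Y} (hfK : Set.MapsTo f K K') (hgK : Set.MapsTo g K K')
    (hff : ∀ x ∈ K, ∀ y ∈ K, dist x y ≤ ε → dist (f x) (f y) ≤ ε')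
    (hfg : ∀ x ∈ K, ∀ y ∈ K, dist x y ≤ ε → dist (f x) (g y) ≤ ε')
    (hgg : ∀ x ∈ K, ∀ y ∈ K, dist x y ≤ ε → dist (g x) (g y) ≤ ε') {c : OrderedChain X}
    (hc : c ∈ supportedIn (smallSimplices K n ε)) :
    prism f g c ∈ supportedIn (smallSimplices K' (n + 1) ε') := by
  refine apply_mem_of_mem_supportedIn ?_ hc
  rintro l ⟨rfl, hlK, hdist⟩
  rw [prism_simplex]
  refine Finsupp.supported_mono ?_ (prismSum_mem_supportedIn f g l)
  rintro l' ⟨hlen, hl'⟩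
  refine ⟨hlen, fun y hy ↦ ?_, fun y hy z hz ↦ ?_⟩
  · obtain ⟨x, hx, rfl | rfl⟩ := hl' y hy
    exacts [hfK (hlK x hx), hgK (hlK x hx)]
  · obtain ⟨x, hx, hyx⟩ := hl' y hy
    obtain ⟨w, hw, hzw⟩ := hl' z hz
    have hxw := hdist x hx w hw
    have hwx := hdist w hw x hx
    have hxK := hlK x hx
    have hwK := hlK w hw
    rcases hyx with rfl | rfl <;> rcases hzw with rfl | rfl
    exacts [hff x hxK w hwK hxw, hfg x hxK w hwK hxw, dist_comm (f w) (g x) ▸ hfg w hwK x hxK hwx,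
      hgg x hxK w hwK hxw]

variable {E : Type*} [NormedAddCommGroup E] [NormedSpace ℝ E]

lemma dist_lineMap_lineMap_le {s : ℝ} (hs : s ∈ Set.Icc (0 : ℝ) 1) (t : ℝ) (x y b : E) :
    dist (AffineMap.lineMap x b s) (AffineMap.lineMap y b t) ≤ dist x y + dist s t * dist y b := by
  have h : dist (AffineMap.lineMap x b s) (AffineMap.lineMap y b s) = (1 - s) * dist x y := by
    rw [dist_eq_norm, dist_eq_norm, ← abs_of_nonneg (sub_nonneg.2 hs.2), ← Real.norm_eq_abs,
      ← norm_smul]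
    congr 1
    simp only [AffineMap.lineMap_apply_module]
    module
  calc _ ≤ (1 - s) * dist x y + dist s t * dist y b := by
        rw [← h, ← dist_lineMap_lineMap]
        exact dist_triangle _ _ _
    _ ≤ dist x y + dist s t * dist y b := by
        gcongr
        exact mul_le_of_le_one_left dist_nonneg (by linarith [hs.1])

lemma contract_mem_smallSimplices {K K' : Set E} {b : E} {N : ℕ} {D : ℝ} (hN : 0 < N) (hε : 0 ≤ ε)
    (hD : 0 ≤ D) (hKD : ∀ x ∈ K, dist x b ≤ D) (hK : ∀ x ∈ K, segment ℝ x b ⊆ K') (hb : b ∈ K')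
    {c : OrderedChain E} (hc : c ∈ supportedIn (smallSimplices K n ε)) :
    contract b N c ∈ supportedIn (smallSimplices K' (n + 1) (ε + D / N)) := by
  have hN' : (0 : ℝ) < N := Nat.cast_pos.2 hN
  have div_mem {j : ℕ} (hj : j ≤ N) : (j / N : ℝ) ∈ Set.Icc (0 : ℝ) 1 :=
    ⟨by positivity, div_le_one_of_le₀ (Nat.cast_le.2 hj) hN'.le⟩
  have mapsTo {j : ℕ} (hj : j ≤ N) :
      Set.MapsTo (fun x ↦ AffineMap.lineMap x b (j / N : ℝ)) K K' := fun x hx ↦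
    hK x hx (segment_eq_image_lineMap ℝ x b ▸ Set.mem_image_of_mem _ (div_mem hj))
  have dist_le {i j : ℕ} (hi : i ≤ N) (hij : dist (i : ℝ) j ≤ 1) :
      ∀ x ∈ K, ∀ y ∈ K, dist x y ≤ ε →
        dist (AffineMap.lineMap x b (i / N : ℝ)) (AffineMap.lineMap y b (j / N : ℝ)) ≤
          ε + D / N := fun x _ y hy hxy ↦ by
    have hdist : dist (i / N : ℝ) (j / N : ℝ) ≤ 1 / N := by
      rw [Real.dist_eq, ← sub_div, abs_div, abs_of_pos hN', ← Real.dist_eq]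
      gcongr
    calc _ ≤ dist x y + dist (i / N : ℝ) (j / N : ℝ) * dist y b :=
          dist_lineMap_lineMap_le (div_mem hi) _ x y b
      _ ≤ ε + 1 / N * D := by gcongr; exact hKD y hy
      _ = ε + D / N := by ring
  rw [contract, LinearMap.add_apply, LinearMap.sum_apply]
  refine Submodule.add_mem _ (Submodule.sum_mem _ fun j hj ↦ ?_) ?_
  · have hj := Finset.mem_range.1 hj
    exact prism_mem_smallSimplices (mapsTo hj.le) (mapsTo hj) (dist_le hj.le (by simp))
      (dist_le hj.le (by simp)) (dist_le hj (by simp)) hc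
  · refine apply_mem_of_mem_supportedIn ?_ hc
    rintro l ⟨hlen, -, -⟩
    simp only [LinearMap.comp_apply, map_simplex, cone_simplex, div_self hN'.ne',
      AffineMap.lineMap_apply_one]
    have eq_apex : ∀ x ∈ b :: l.map fun _ ↦ b, x = b := by simp
    refine simplex_mem_supportedIn ⟨by simpa using hlen, fun x hx ↦ eq_apex x hx ▸ hb, ?_⟩
    intro x hx y hy
    rw [eq_apex x hx, eq_apex y hy, dist_self]
    positivity

end SmallSimplices

end OrderedChain

open OrderedChain

/-- The space `ℝᵐ` with the `ℓ¹` norm, whose unit sphere is octahedral: segments joining points of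
a coordinate subsphere to the next vertex stay in the sphere. -/
abbrev L1Space (m : ℕ) := PiLp 1 fun _ : Fin m ↦ ℝ

namespace L1Space

variable {m k : ℕ}

/-- The part of the unit sphere of `ℓ¹` on which only the first `k` coordinates may be nonzero. -/
def coordSphere (m k : ℕ) : Set (L1Space m) :=
  {x | ‖x‖ = 1 ∧ ∀ i : Fin m, k ≤ i → x i = 0}

/-- The `k`-th standard basis vector of `ℓ¹`, which is `0` for `k ≥ m`. -/
noncomputable def basisVector (m k : ℕ) : L1Space m :=
  WithLp.toLp 1 fun i ↦ if (i : ℕ) = k then 1 else 0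

lemma norm_add_smul_basisVector (hk : k < m) {x : L1Space m} (hx : x ⟨k, hk⟩ = 0)
    {t : ℝ} (ht : 0 ≤ t) : ‖x + t • basisVector m k‖ = ‖x‖ + t := by
  have coord (i : Fin m) :
      ‖(x + t • basisVector m k) i‖ = ‖x i‖ + if i = ⟨k, hk⟩ then t else 0 := by
    by_cases hi : i = ⟨k, hk⟩
    · simp [basisVector, hi, hx, abs_of_nonneg ht]
    · simp [basisVector, hi, show (i : ℕ) ≠ k from fun h ↦ hi (Fin.ext h)]
  simp only [PiLp.norm_eq_of_L1, coord, Finset.sum_add_distrib, Finset.sum_ite_eq',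
    Finset.mem_univ, if_true]

lemma basisVector_mem_coordSphere (hk : k < m) : basisVector m k ∈ coordSphere m (k + 1) := by
  refine ⟨?_, fun i hi ↦ by simp [basisVector, show (i : ℕ) ≠ k by omega]⟩
  simpa using norm_add_smul_basisVector hk (x := 0) rfl zero_le_one

lemma neg_mem_coordSphere {x : L1Space m} (hx : x ∈ coordSphere m k) :
    -x ∈ coordSphere m k :=
  ⟨by rw [norm_neg, hx.1], fun i hi ↦ by rw [PiLp.neg_apply, hx.2 i hi, neg_zero]⟩

lemma segment_basisVector_subset_coordSphere (hk : k < m) {x : L1Space m}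
    (hx : x ∈ coordSphere m k) : segment ℝ x (basisVector m k) ⊆ coordSphere m (k + 1) := by
  rintro _ ⟨s, t, hs, ht, hst, rfl⟩
  refine ⟨?_, fun i hi ↦ ?_⟩
  · rw [norm_add_smul_basisVector hk (by simp [hx.2]) ht, norm_smul, hx.1, Real.norm_of_nonneg hs,
      mul_one, hst]
  · simp [basisVector, hx.2 i (by omega), show (i : ℕ) ≠ k by omega]

lemma hemisphere_mem_smallSimplices {N : ℕ} (hN : 0 < N) (hk : k < m) :
    hemisphere (basisVector m) N k ∈
      supportedIn (smallSimplices (coordSphere m (k + 1)) (k + 1) (k * (2 / N))) := by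
  induction k with
  | zero =>
    exact simplex_mem_supportedIn
      ⟨rfl, by simpa using basisVector_mem_coordSphere hk, by simp⟩
  | succ k ih =>
    have hemi := ih (k.lt_succ_self.trans hk)
    have antipode := map_mem_smallSimplices (f := Neg.neg) (fun _ ↦ neg_mem_coordSphere)
      (fun x _ y _ hxy ↦ (dist_neg_neg x y).trans_le hxy) hemi
    have dist_le (x) (hx : x ∈ coordSphere m (k + 1)) : dist x (basisVector m (k + 1)) ≤ 2 :=
      calc _ ≤ ‖x‖ + ‖basisVector m (k + 1)‖ := dist_le_norm_add_norm _ _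
        _ = 2 := by rw [hx.1, (basisVector_mem_coordSphere hk).1]; norm_num
    have hfill := contract_mem_smallSimplices hN (by positivity) zero_le_two dist_le
      (fun x ↦ segment_basisVector_subset_coordSphere hk) (basisVector_mem_coordSphere hk)
      (Submodule.add_mem _ hemi antipode)
    have mesh : ((k + 1 : ℕ) : ℝ) * (2 / N) = k * (2 / N) + 2 / N := by push_cast; ring
    rwa [mesh]

end L1Space

open L1Space

lemma exists_antipodal_label {X : Type*} [InvolutiveNeg X] (f : X → ℝ) :
    ∃ e : X → ZMod 2, (∀ x, -x ≠ x → e (-x) = e x + 1) ∧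
      ∀ x y, e x ≠ e y → (0 : ℝ) ∈ Set.uIcc (f x - f (-x)) (f y - f (-y)) := by
  classical
  let : LinearOrder X := linearOrderOfSTO WellOrderingRel
  -- Ordering lexicographically by `f` and then by a well-order breaks the ties `f (-x) = f x`.
  let key (x : X) : ℝ ×ₗ X := toLex (f x, x)
  let e (x : X) : ZMod 2 := if key (-x) < key x then 0 else 1
  have sub_nonneg_of_lt {x : X} (h : key (-x) < key x) : 0 ≤ f x - f (-x) :=
    sub_nonneg.2 (Prod.Lex.monotone_fst _ _ h.le)
  have sub_nonpos_of_not_lt {x : X} (h : ¬ key (-x) < key x) : f x - f (-x) ≤ 0 :=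
    sub_nonpos.2 (Prod.Lex.monotone_fst _ _ (not_lt.1 h))
  refine ⟨e, fun x hx ↦ ?_, fun x y hxy ↦ ?_⟩
  · have hkey : key (-x) ≠ key x := fun h ↦ hx (congr(Prod.snd (ofLex $h)))
    rcases hkey.lt_or_gt with h | h
    · simp [e, h, h.not_gt]
    · simp only [e, neg_neg, h, h.not_gt, if_true, if_false]
      rfl
  · by_cases hx : key (-x) < key x <;> by_cases hy : key (-y) < key y
    · simp [e, hx, hy] at hxy
    · exact Set.mem_uIcc_of_ge (sub_nonpos_of_not_lt hy) (sub_nonneg_of_lt hx)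
    · exact Set.mem_uIcc_of_le (sub_nonpos_of_not_lt hx) (sub_nonneg_of_lt hy)
    · simp [e, hx, hy] at hxy

lemma exists_small_simplex_of_labels (m : ℕ) {δ : ℝ} (hδ : 0 < δ)
    {e : ℕ → L1Space (m + 1) → ZMod 2}
    (he : ∀ i, ∀ x ∈ Metric.sphere 0 1, e i (-x) = e i x + 1) :
    ∃ l : List (L1Space (m + 1)), l ≠ [] ∧ (∀ x ∈ l, x ∈ Metric.sphere 0 1) ∧
      (∀ x ∈ l, ∀ y ∈ l, dist x y < δ) ∧ ∀ i < m, ∃ x ∈ l, ∃ y ∈ l, e i x ≠ e i y := by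
  obtain ⟨N, hN⟩ := exists_nat_gt (m * 2 / δ)
  have hN0 : 0 < N := Nat.cast_pos.1 ((show 0 ≤ m * 2 / δ by positivity).trans_lt hN)
  have hmesh : m * (2 / N : ℝ) < δ := by
    rw [div_lt_iff₀ hδ] at hN
    rw [← mul_div_assoc, div_lt_iff₀ (by positivity)]
    linarith
  have heval : eval (cupCoboundary e) (hemisphere (basisVector (m + 1)) N m) = 1 := by
    refine eval_cupCoboundary_hemisphere _ N e m fun j hj ↦ ?_
    refine Finsupp.supported_mono ?_ (hemisphere_mem_smallSimplices hN0 (hj.trans m.lt_succ_self))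
    exact fun l hl x hx i ↦ he i x (mem_sphere_zero_iff_norm.2 (hl.2.1 x hx).1)
  obtain ⟨l, ⟨hlen, hl, hdist⟩, hne⟩ := exists_ne_zero_of_eval_ne_zero
    (hemisphere_mem_smallSimplices hN0 m.lt_succ_self) (heval ▸ one_ne_zero)
  refine ⟨l, by rintro rfl; simp at hlen, fun x hx ↦ mem_sphere_zero_iff_norm.2 (hl x hx).1,
    fun x hx y hy ↦ (hdist x hx y hy).trans_lt hmesh, fun i hi ↦ ?_⟩
  exact exists_ne_of_cupCoboundary_ne_zero hne (by omega)

lemma continuousOn_sub_antipode {E F : Type*} [SeminormedAddCommGroup E] [TopologicalSpace F]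
    [AddGroup F] [IsTopologicalAddGroup F] {f : E → F} {r : ℝ}
    (hf : ContinuousOn f (Metric.sphere 0 r)) :
    ContinuousOn (fun x ↦ f x - f (-x)) (Metric.sphere 0 r) :=
  hf.sub (hf.comp continuous_neg.continuousOn fun x hx ↦ by simpa using hx)

lemma exists_norm_sub_antipode_lt (m : ℕ) {f : L1Space (m + 1) → Fin m → ℝ}
    (hf : ContinuousOn f (Metric.sphere 0 1)) {ε : ℝ} (hε : 0 < ε) :
    ∃ x ∈ Metric.sphere (0 : L1Space (m + 1)) 1, ‖f x - f (-x)‖ < ε := by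
  let g x := f x - f (-x)
  obtain ⟨δ, hδ, hgδ⟩ := Metric.uniformContinuousOn_iff.1
    ((isCompact_sphere 0 1).uniformContinuousOn_of_continuous
      (continuousOn_sub_antipode hf)) ε hε
  choose e he_neg he_sign using fun i : ℕ ↦
    exists_antipodal_label fun x ↦ if hi : i < m then f x ⟨i, hi⟩ else 0
  have he (i : ℕ) (x) (hx : x ∈ Metric.sphere (0 : L1Space (m + 1)) 1) :
      e i (-x) = e i x + 1 :=
    he_neg i x fun h ↦ ne_neg_of_mem_unit_sphere ℝ ⟨x, hx⟩ (Subtype.ext h.symm)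
  obtain ⟨l, hl, hlS, hdist, hlabel⟩ := exists_small_simplex_of_labels m hδ he
  obtain ⟨z, hz⟩ := List.exists_mem_of_ne_nil l hl
  refine ⟨z, hlS z hz, ?_⟩
  rw [pi_norm_lt_iff hε]
  intro i
  have mem_ball {x} (hx : x ∈ l) : g x i ∈ Metric.ball (g z i) ε :=
    (dist_le_pi_dist _ _ i).trans_lt (hgδ x (hlS x hx) z (hlS z hz) (hdist x hx z hz))
  obtain ⟨x, hx, y, hy, hxy⟩ := hlabel i i.2
  have zero_mem_uIcc : 0 ∈ Set.uIcc (g x i) (g y i) := by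
    simpa only [i.2, dite_true, Fin.eta, g, Pi.sub_apply] using he_sign i x y hxy
  have zero_mem_ball : 0 ∈ Metric.ball (g z i) ε := by
    rw [Real.ball_eq_Ioo] at mem_ball ⊢
    exact Set.ordConnected_Ioo.uIcc_subset (mem_ball hx) (mem_ball hy) zero_mem_uIcc
  rwa [Metric.mem_ball, dist_zero_left] at zero_mem_ball

theorem exists_eq_antipode_of_l1_sphere (m : ℕ)
    {f : L1Space (m + 1) → Fin m → ℝ}
    (hf : ContinuousOn f (Metric.sphere 0 1)) :
    ∃ x ∈ Metric.sphere (0 : L1Space (m + 1)) 1, f x = f (-x) := by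
  obtain ⟨x₁, hx₁, -⟩ := exists_norm_sub_antipode_lt m hf one_pos
  obtain ⟨x, hx, hmin⟩ := (isCompact_sphere 0 1).exists_isMinOn ⟨x₁, hx₁⟩
    (continuousOn_sub_antipode hf).norm
  refine ⟨x, hx, by_contra fun hne ↦ ?_⟩
  obtain ⟨y, hy, hlt⟩ := exists_norm_sub_antipode_lt m hf (norm_pos_iff.2 (sub_ne_zero.2 hne))
  exact (isMinOn_iff.1 hmin y hy).not_gt hlt

section NormedSpace

variable {X : Type*} [NormedAddCommGroup X] [NormedSpace ℝ X] {n : ℕ} {v : Fin (n + 1) → X} {r : ℝ}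

lemma exists_odd_map_l1_sphere (hv : LinearIndependent ℝ v) (hr : 0 ≤ r) :
    ∃ h : L1Space (n + 1) → X, ContinuousOn h (Metric.sphere 0 1) ∧
      Set.MapsTo h (Metric.sphere 0 1) (Metric.sphere 0 r) ∧ ∀ x, h (-x) = -h x := by
  let L : L1Space (n + 1) →ₗ[ℝ] X :=
    Fintype.linearCombination ℝ v ∘ₗ (WithLp.linearEquiv 1 ℝ (Fin (n + 1) → ℝ)).toLinearMap
  have hL : Continuous L := L.continuous_of_finiteDimensional
  have norm_ne_zero : ∀ x ∈ Metric.sphere 0 1, ‖L x‖ ≠ 0 := fun x hx ↦ by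
    have hinj : Function.Injective L := hv.fintypeLinearCombination_injective.comp
      (WithLp.linearEquiv 1 ℝ _).injective
    exact norm_ne_zero_iff.2 fun h ↦
      ne_zero_of_mem_unit_sphere ⟨x, hx⟩ (hinj (h.trans (map_zero L).symm))
  refine ⟨fun x ↦ (r / ‖L x‖) • L x, ?_, fun x hx ↦ ?_, fun x ↦ ?_⟩
  · exact (continuousOn_const.div hL.norm.continuousOn norm_ne_zero).smul hL.continuousOn
  · rw [mem_sphere_zero_iff_norm, norm_smul, norm_div, norm_norm, Real.norm_of_nonneg hr,
      div_mul_cancel₀ r (norm_ne_zero x hx)]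
  · simp only [map_neg, norm_neg, smul_neg]

theorem borsuk_ulam (hv : LinearIndependent ℝ v) (hr : 0 ≤ r) {f : X → Fin n → ℝ}
    (hf : ContinuousOn f (Metric.sphere 0 r)) : ∃ x ∈ Metric.sphere 0 r, f x = f (-x) := by
  obtain ⟨h, hcont, hmaps, hodd⟩ := exists_odd_map_l1_sphere hv hr
  obtain ⟨x, hx, heq⟩ := exists_eq_antipode_of_l1_sphere n (hf.comp hcont hmaps)
  exact ⟨h x, hmaps hx, by simpa only [Function.comp_apply, hodd] using heq⟩

theorem lsb_normed_space_general (hv : LinearIndependent ℝ v) (hr : 0 ≤ r)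
    {A : Fin (n + 1) → Set X} (j : Fin (n + 1)) (hclosed : ∀ i ≠ j, IsClosed (A i))
    (hcover : Metric.sphere 0 r ⊆ ⋃ i, A i) :
    ∃ i, ∃ x ∈ Metric.sphere 0 r, x ∈ A i ∧ -x ∈ A i := by
  let f (x : X) (i : Fin n) : ℝ := Metric.infDist x (A (j.succAbove i))
  have hf : Continuous f := continuous_pi fun i ↦ Metric.continuous_infDist_pt _
  obtain ⟨x, hx, hfx⟩ := borsuk_ulam hv hr hf.continuousOn
  have mem_of_mem (i : Fin n) {y z : X} (hyz : f y = f z) (hy : y ∈ A (j.succAbove i)) :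
      z ∈ A (j.succAbove i) := by
    rw [(hclosed _ (j.succAbove_ne i)).mem_iff_infDist_zero ⟨y, hy⟩]
    exact (congrFun hyz i).symm.trans (Metric.infDist_zero_of_mem hy)
  obtain ⟨i, hi⟩ := Set.mem_iUnion.1 (hcover hx)
  obtain ⟨i', hi'⟩ := Set.mem_iUnion.1 (hcover (show -x ∈ Metric.sphere 0 r by simpa using hx))
  rcases j.eq_self_or_eq_succAbove i with rfl | ⟨k, rfl⟩
  · rcases i.eq_self_or_eq_succAbove i' with rfl | ⟨k', rfl⟩
    · exact ⟨_, x, hx, hi, hi'⟩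
    · exact ⟨_, x, hx, mem_of_mem k' hfx.symm hi', hi'⟩
  · exact ⟨_, x, hx, hi, mem_of_mem k hfx hi⟩

end NormedSpace

/-- LSB in normed spaces: Let `X` be a real normed space containing `m`
linearly independent vectors (`m ≥ 1`), and let `r > 0`. If the sphere `S(θ, r)` is the
union of `m` closed sets `A 0, …, A (m-1)`, then some `A i₀` contains a pair of
antipodal points `x, -x` of the sphere. -/
theorem lsb_normed_space
    {X : Type*} [NormedAddCommGroup X] [NormedSpace ℝ X]
    (m : ℕ) (hm : 1 ≤ m) (hLI : ∃ v : Fin m → X, LinearIndependent ℝ v)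
    (r : ℝ) (hr : 0 < r)
    (A : Fin m → Set X) (hclosed : ∀ i, IsClosed (A i))
    (hcover : {x : X | ‖x‖ = r} = ⋃ i, A i) :
    ∃ (i₀ : Fin m) (x : X), ‖x‖ = r ∧ x ∈ A i₀ ∧ -x ∈ A i₀ := by
  obtain ⟨v, hv⟩ := hLI
  obtain ⟨n, rfl⟩ := Nat.exists_eq_add_of_le' hm
  simpa [Metric.sphere] using lsb_normed_space_general hv hr.le 0 (fun i _ ↦ hclosed i)
    (by simpa [Metric.sphere] using hcover.subset)
end

section
/- Let S = {x ∈ ℓ² : ‖x‖ = 1}, let D = {d_i : i ∈ ℕ} ⊆ S be geodesically dense in S, and let 0 < ε < 1. Then the sets A_i = {x ∈ S : ‖x − d_i‖ ≤ ε}, i ∈ ℕ, are closed, pairwise congruent, their union is S, and no A_i contains a pair {x, −x} of antipodal points of S. -/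
open scoped RealInnerProductSpace

/-! A chord is no longer than the arc it subtends, so every point of the sphere lies within
distance `ε` of any geodesic `ε`-net. Caps of equal radius are exchanged by the reflection swapping
their centres. The parallelogram law gives `‖x - d‖ ^ 2 + ‖-x - d‖ ^ 2 = 4` for unit vectors `x` and
`d`, so a cap containing `x` and `-x` has radius at least `√2`. -/

/-- The closed cap of the unit sphere with centre `p` and radius `ε`. The radius is measured by
the chord, that is in the ambient norm, and `p` is allowed to lie off the sphere. -/
def sphericalCap {E : Type*} [SeminormedAddCommGroup E] (p : E) (ε : ℝ) : Set E :=
  {x | ‖x‖ = 1 ∧ ‖x - p‖ ≤ ε}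

section Normed

variable {E F : Type*} [SeminormedAddCommGroup E] [SeminormedAddCommGroup F]

theorem isClosed_sphericalCap (p : E) (ε : ℝ) : IsClosed (sphericalCap p ε) :=
  (isClosed_eq continuous_norm continuous_const).inter
    (isClosed_le (continuous_id.sub continuous_const).norm continuous_const)

theorem image_sphericalCap {R : Type*} [Semiring R] [Module R E] [Module R F]
    (g : E ≃ₗᵢ[R] F) (p : E) (ε : ℝ) : g '' sphericalCap p ε = sphericalCap (g p) ε := by
  ext y
  obtain ⟨x, rfl⟩ := g.surjective y
  simp only [g.injective.mem_set_image, sphericalCap, Set.mem_ofPred_eq, ← map_sub, g.norm_map]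

end Normed

section InnerProduct

variable {E : Type*} [NormedAddCommGroup E] [InnerProductSpace ℝ E] {x y p q : E} {ε : ℝ}

theorem exists_linearIsometryEquiv_image_sphericalCap_eq (h : ‖p‖ = ‖q‖) (ε : ℝ) :
    ∃ g : E ≃ₗᵢ[ℝ] E, g '' sphericalCap p ε = sphericalCap q ε :=
  ⟨(ℝ ∙ (p - q))ᗮ.reflection, by rw [image_sphericalCap, Submodule.reflection_sub h]⟩

theorem norm_sub_le_norm_mul_angle (h : ‖x‖ = ‖y‖) :
    ‖x - y‖ ≤ ‖x‖ * InnerProductGeometry.angle x y := by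
  set θ := InnerProductGeometry.angle x y
  refine le_of_sq_le_sq ?_ (mul_nonneg (norm_nonneg x) (InnerProductGeometry.angle_nonneg x y))
  calc ‖x - y‖ ^ 2 = 2 * ‖x‖ ^ 2 * (1 - Real.cos θ) := by
        rw [norm_sub_sq_real, ← InnerProductGeometry.cos_angle_mul_norm_mul_norm, ← h]
        ring
    _ ≤ 2 * ‖x‖ ^ 2 * (θ ^ 2 / 2) := by
        gcongr
        linarith [Real.one_sub_sq_div_two_le_cos (x := θ)]
    _ = (‖x‖ * θ) ^ 2 := by ring

theorem norm_sub_le_arccos_inner (hx : ‖x‖ = 1) (hy : ‖y‖ = 1) :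
    ‖x - y‖ ≤ Real.arccos ⟪x, y⟫ := by
  simpa only [InnerProductGeometry.angle, hx, hy, one_mul, div_one] using
    norm_sub_le_norm_mul_angle (hx.trans hy.symm)

theorem iUnion_sphericalCap_of_forall_exists_arccos_inner_le {ι : Type*} {d : ι → E}
    (hd : ∀ i, ‖d i‖ = 1) (hnet : ∀ x : E, ‖x‖ = 1 → ∃ i, Real.arccos ⟪x, d i⟫ ≤ ε) :
    ⋃ i, sphericalCap (d i) ε = {x : E | ‖x‖ = 1} := by
  refine Set.Subset.antisymm (Set.iUnion_subset fun i x hx => hx.1) fun x hx => ?_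
  obtain ⟨i, hi⟩ := hnet x hx
  exact Set.mem_iUnion.2 ⟨i, hx, (norm_sub_le_arccos_inner hx (hd i)).trans hi⟩

theorem neg_notMem_sphericalCap (hp : ‖p‖ = 1) (hε : ε < √2) (hx : x ∈ sphericalCap p ε) :
    -x ∉ sphericalCap p ε := by
  rintro ⟨-, hneg⟩
  obtain ⟨hx_norm, hpos⟩ := hx
  have hsum : ‖-x - p‖ ^ 2 + ‖x - p‖ ^ 2 = 4 := by
    rw [← neg_add', norm_neg, parallelogram_law_with_norm ℝ, hx_norm, hp]
    norm_num
  have hε_sq : ε ^ 2 < 2 := (Real.lt_sqrt ((norm_nonneg _).trans hpos)).1 hε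
  linarith [pow_le_pow_left₀ (norm_nonneg _) hpos 2, pow_le_pow_left₀ (norm_nonneg _) hneg 2]

theorem caps_cover_sphere_no_antipodal_general {ι : Type*} (d : ι → E) (hd : ∀ i, ‖d i‖ = 1)
    (hnet : ∀ x : E, ‖x‖ = 1 → ∃ i, Real.arccos ⟪x, d i⟫ ≤ ε) (hε : ε < √2) :
    (∀ i, IsClosed (sphericalCap (d i) ε)) ∧
    (∀ i j, ∃ f : E → E, Function.Surjective f ∧ (∀ x y, ‖f x - f y‖ = ‖x - y‖) ∧
      f '' sphericalCap (d i) ε = sphericalCap (d j) ε) ∧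
    (⋃ i, sphericalCap (d i) ε) = {x : E | ‖x‖ = 1} ∧
    (∀ i, ¬ ∃ x : E, x ∈ sphericalCap (d i) ε ∧ -x ∈ sphericalCap (d i) ε) := by
  refine ⟨fun i => isClosed_sphericalCap (d i) ε, fun i j => ?_,
    iUnion_sphericalCap_of_forall_exists_arccos_inner_le hd hnet,
    fun i ⟨x, hx, hneg⟩ => neg_notMem_sphericalCap (hd i) hε hx hneg⟩
  obtain ⟨g, hg⟩ := exists_linearIsometryEquiv_image_sphericalCap_eq ((hd i).trans (hd j).symm) ε
  exact ⟨g, g.surjective, fun x y => by rw [← map_sub, g.norm_map], hg⟩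

end InnerProduct

/-- If `D = {d i : i ∈ ℕ}` is a geodesically dense subset of the unit
sphere `S` of `ℓ²` and `0 < ε < 1`, then the sets `A i = {x ∈ S : ‖x - d i‖ ≤ ε}` are
closed, pairwise congruent, their union is `S`, and no `A i` contains a pair of
antipodal points of `S`. -/
theorem caps_cover_sphere_no_antipodal
    (d : ℕ → lp (fun _ : ℕ => ℝ) 2) (hd : ∀ i, ‖d i‖ = 1)
    (hdense : ∀ β : ℝ, 0 < β → ∀ x : lp (fun _ : ℕ => ℝ) 2, ‖x‖ = 1 →
      ∃ i : ℕ, Real.arccos ⟪x, d i⟫ < β)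
    (ε : ℝ) (hε0 : 0 < ε) (hε1 : ε < 1)
    (A : ℕ → Set (lp (fun _ : ℕ => ℝ) 2))
    (hA : ∀ i, A i = {x : lp (fun _ : ℕ => ℝ) 2 | ‖x‖ = 1 ∧ ‖x - d i‖ ≤ ε}) :
    (∀ i, IsClosed (A i)) ∧
    (∀ i j, ∃ f : lp (fun _ : ℕ => ℝ) 2 → lp (fun _ : ℕ => ℝ) 2,
      Function.Surjective f ∧ (∀ x y, ‖f x - f y‖ = ‖x - y‖) ∧ f '' A i = A j) ∧
    (⋃ i, A i) = {x : lp (fun _ : ℕ => ℝ) 2 | ‖x‖ = 1} ∧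
    (∀ i, ¬ ∃ x : lp (fun _ : ℕ => ℝ) 2, x ∈ A i ∧ -x ∈ A i) := by
  obtain rfl : A = fun i => sphericalCap (d i) ε := funext hA
  exact caps_cover_sphere_no_antipodal_general d hd
    (fun x hx => (hdense ε hε0 x hx).imp fun _ => le_of_lt) (hε1.trans Real.one_lt_sqrt_two)
end

section
/- Two ommatidiums in ℓ² of the same angle and the same radius are congruent: if s₁ ≠ e₁, s₂ ≠ e₂, γ ∈ [0,π], and ‖e₁ − s₁‖ = ‖e₂ − s₂‖, then there exists a motion f of ℓ² with f(C(s₁,e₁,γ)) = C(s₂,e₂,γ). -/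
/-!
Ommatidiums are defined by distances and angles, so a motion carrying `s₁` to `s₂` and `e₁` to `e₂`
carries one onto the other. To find such a motion, translate both apexes to the origin: the axis
vectors `e₁ - s₁` and `e₂ - s₂` have equal norms, so the reflection in the orthogonal complement of
their difference maps the first to the second.
-/

/-- The ommatidium `C(s, e, γ)` in `ℓ²`. -/
noncomputable def ommatidium (s e : lp (fun _ : ℕ => ℝ) 2) (γ : ℝ) :
    Set (lp (fun _ : ℕ => ℝ) 2) :=
  {x | ‖x - s‖ ≤ ‖e - s‖ ∧ (x = s ∨ InnerProductGeometry.angle (x - s) (e - s) ≤ γ)}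

section SphericalSector

open scoped EuclideanGeometry

variable {V V' P P' : Type*}
  [NormedAddCommGroup V] [InnerProductSpace ℝ V] [MetricSpace P] [NormedAddTorsor V P]
  [NormedAddCommGroup V'] [InnerProductSpace ℝ V'] [MetricSpace P'] [NormedAddTorsor V' P']

/-- The spherical sector with apex `s`, axis through `e`, radius `dist e s` and half-angle `γ`: the
ommatidium of an arbitrary Euclidean affine space. The apex is admitted separately because
`∠ s s e` takes the default value `π / 2`. -/
def sphericalSector (s e : P) (γ : ℝ) : Set P :=
  {x | dist x s ≤ dist e s ∧ (x = s ∨ ∠ x s e ≤ γ)}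

theorem preimage_sphericalSector (f : P →ᵃⁱ[ℝ] P') (s e : P) (γ : ℝ) :
    f ⁻¹' sphericalSector (f s) (f e) γ = sphericalSector s e γ := by
  ext x
  simp only [sphericalSector, Set.mem_preimage, Set.mem_ofPred_eq, f.dist_map, f.map_eq_iff,
    f.angle_map]

theorem image_sphericalSector (f : P ≃ᵃⁱ[ℝ] P') (s e : P) (γ : ℝ) :
    f '' sphericalSector s e γ = sphericalSector (f s) (f e) γ := by
  rw [← preimage_sphericalSector f.toAffineIsometry]
  exact Set.image_preimage_eq _ f.surjective

theorem exists_affineIsometryEquiv_of_dist_eq {s₁ e₁ s₂ e₂ : P}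
    (h : dist e₁ s₁ = dist e₂ s₂) : ∃ f : P ≃ᵃⁱ[ℝ] P, f s₁ = s₂ ∧ f e₁ = e₂ := by
  have hnorm : ‖e₁ -ᵥ s₁‖ = ‖e₂ -ᵥ s₂‖ := by simpa only [dist_eq_norm_vsub V] using h
  obtain ⟨L, hL⟩ : ∃ L : V ≃ₗᵢ[ℝ] V, L (e₁ -ᵥ s₁) = e₂ -ᵥ s₂ :=
    ⟨_, Submodule.reflection_sub hnorm⟩
  refine ⟨(AffineIsometryEquiv.vaddConst ℝ s₁).symm.trans
    (L.toAffineIsometryEquiv.trans (AffineIsometryEquiv.vaddConst ℝ s₂)), ?_, ?_⟩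
  · simp
  · simp [hL]

theorem ommatidium_congr_general {s₁ e₁ s₂ e₂ : P} (h : dist e₁ s₁ = dist e₂ s₂) (γ : ℝ) :
    ∃ f : P ≃ᵃⁱ[ℝ] P, f '' sphericalSector s₁ e₁ γ = sphericalSector s₂ e₂ γ := by
  obtain ⟨f, rfl, rfl⟩ := exists_affineIsometryEquiv_of_dist_eq h
  exact ⟨f, image_sphericalSector f s₁ e₁ γ⟩

end SphericalSector

theorem ommatidium_eq_sphericalSector (s e : lp (fun _ : ℕ => ℝ) 2) (γ : ℝ) :
    ommatidium s e γ = sphericalSector s e γ := by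
  simp only [ommatidium, sphericalSector, dist_eq_norm, EuclideanGeometry.angle, vsub_eq_sub]

/-- Two ommatidiums in `ℓ²` of the same angle and the same radius are
congruent: there is a motion of `ℓ²` mapping one onto the other. -/
theorem ommatidium_congr
    (s₁ e₁ s₂ e₂ : lp (fun _ : ℕ => ℝ) 2) (h₁ : s₁ ≠ e₁) (h₂ : s₂ ≠ e₂)
    (γ : ℝ) (hγ0 : 0 ≤ γ) (hγπ : γ ≤ Real.pi)
    (hrad : ‖e₁ - s₁‖ = ‖e₂ - s₂‖) :
    ∃ f : lp (fun _ : ℕ => ℝ) 2 → lp (fun _ : ℕ => ℝ) 2,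
      Function.Surjective f ∧ (∀ x y, ‖f x - f y‖ = ‖x - y‖) ∧
      f '' ommatidium s₁ e₁ γ = ommatidium s₂ e₂ γ := by
  simp only [ommatidium_eq_sphericalSector, ← dist_eq_norm] at hrad ⊢
  obtain ⟨f, hf⟩ := ommatidium_congr_general hrad γ
  exact ⟨f, f.surjective, f.dist_map, hf⟩
end

section
/- Let d ∈ ℓ² with ‖d‖ = 1 and let 0 ≤ γ ≤ arccos(1/4). Then the ommatidium C(−d/2, d/2, γ) is contained in the closed unit ball {x ∈ ℓ² : ‖x‖ ≤ 1}. -/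
/-!
Measure positions from the apex `s`: put `u = x - s`, `v = e - s` and `‖u‖ = t * ‖v‖`, `t ∈ [0, 1]`.
Expanding the square around the midpoint and using `⟪u, v⟫ ≥ cos γ * ‖u‖ * ‖v‖`, the squared
distance from `x` to the midpoint of `s` and `e` is at most
`(t ^ 2 - t * cos γ + 1 / 4) * ‖v‖ ^ 2`. This quadratic in `t` is largest on `[0, 1]` at `t = 1`,
where it is `(5 / 4 - cos γ) * ‖v‖ ^ 2`, and this equals `‖v‖ ^ 2` exactly at `γ = arccos (1 / 4)`.
-/

open scoped RealInnerProductSpace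

theorem cos_mul_norm_mul_norm_le_inner_of_angle_le {V : Type*} [NormedAddCommGroup V]
    [InnerProductSpace ℝ V] {u v : V} {γ : ℝ} (hγ : γ ≤ Real.pi)
    (h : InnerProductGeometry.angle u v ≤ γ) : Real.cos γ * (‖u‖ * ‖v‖) ≤ ⟪u, v⟫ := by
  rw [← InnerProductGeometry.cos_angle_mul_norm_mul_norm]
  gcongr
  exact Real.cos_le_cos_of_nonneg_of_le_pi (InnerProductGeometry.angle_nonneg u v) hγ h

theorem norm_sub_half_smul_sq_le_of_mul_norm_le_inner {V : Type*} [SeminormedAddCommGroup V]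
    [InnerProductSpace ℝ V] {u v : V} {c : ℝ} (hc : c ≤ 1) (hnorm : ‖u‖ ≤ ‖v‖)
    (hinner : c * (‖u‖ * ‖v‖) ≤ ⟪u, v⟫) :
    ‖u - (2⁻¹ : ℝ) • v‖ ^ 2 ≤ (5 / 4 - c) * ‖v‖ ^ 2 := by
  have hexpand : ‖u - (2⁻¹ : ℝ) • v‖ ^ 2 = ‖u‖ ^ 2 - ⟪u, v⟫ + ‖v‖ ^ 2 / 4 := by
    rw [norm_sub_sq_real, real_inner_smul_right, norm_smul, Real.norm_of_nonneg (by norm_num)]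
    ring
  have hcv : c * ‖v‖ ≤ ‖v‖ := mul_le_of_le_one_left (norm_nonneg v) hc
  have hgap : 0 ≤ (‖v‖ - ‖u‖) * (‖v‖ + ‖u‖ - c * ‖v‖) :=
    mul_nonneg (sub_nonneg.2 hnorm) (by linarith [norm_nonneg u])
  linarith

open scoped EuclideanGeometry in
theorem ommatidium_inside_ball_general {V P : Type*} [NormedAddCommGroup V]
    [InnerProductSpace ℝ V] [MetricSpace P] [NormedAddTorsor V P] (s e : P) {γ : ℝ}
    (hγ : γ ≤ Real.pi) :
    {x : P | dist x s ≤ dist e s ∧ (x = s ∨ ∠ x s e ≤ γ)} ⊆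
      Metric.closedBall (midpoint ℝ s e) (√(5 / 4 - Real.cos γ) * dist e s) := by
  rintro x ⟨hdist, hangle⟩
  have hmidpoint : x -ᵥ midpoint ℝ s e = (x -ᵥ s) - (2⁻¹ : ℝ) • (e -ᵥ s) := by
    rw [← vsub_sub_vsub_cancel_right x (midpoint ℝ s e) s, midpoint_vsub_left, invOf_eq_inv]
  have hinner : Real.cos γ * (‖x -ᵥ s‖ * ‖e -ᵥ s‖) ≤ ⟪x -ᵥ s, e -ᵥ s⟫ := by
    rcases hangle with rfl | hangle
    · simp
    · exact cos_mul_norm_mul_norm_le_inner_of_angle_le hγ hangle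
  simp only [dist_eq_norm_vsub V] at hdist
  rw [Metric.mem_closedBall, dist_eq_norm_vsub V, dist_eq_norm_vsub V, hmidpoint,
    ← Real.sqrt_sq (norm_nonneg (e -ᵥ s)), ← Real.sqrt_mul (by linarith [Real.cos_le_one γ])]
  exact Real.le_sqrt_of_sq_le
    (norm_sub_half_smul_sq_le_of_mul_norm_le_inner (Real.cos_le_one γ) hdist hinner)

/-- For a unit vector `d` in `ℓ²` and `0 ≤ γ ≤ arccos (1/4)`, the
ommatidium `C(-d/2, d/2, γ)` is contained in the closed unit ball. -/
theorem ommatidium_inside_ball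
    (d : lp (fun _ : ℕ => ℝ) 2) (hd : ‖d‖ = 1)
    (γ : ℝ) (hγ0 : 0 ≤ γ) (hγ : γ ≤ Real.arccos (1/4)) :
    ommatidium (-((1:ℝ)/2) • d) (((1:ℝ)/2) • d) γ ⊆
      {x : lp (fun _ : ℕ => ℝ) 2 | ‖x‖ ≤ 1} := by
  have hcos : 5 / 4 - Real.cos (Real.arccos (1 / 4)) = 1 := by
    rw [Real.cos_arccos] <;> norm_num
  rintro x ⟨hnorm, hangle⟩
  have hball := ommatidium_inside_ball_general _ _ (Real.arccos_le_pi (1 / 4))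
    ⟨by simpa only [dist_eq_norm] using hnorm, hangle.imp_right (le_trans · hγ)⟩
  simpa only [hcos, Set.mem_ofPred_eq, Metric.mem_closedBall, neg_smul, midpoint_neg_self,
    dist_eq_norm, sub_zero, sub_neg_eq_add, ← add_smul, add_halves, one_smul, hd, Real.sqrt_one,
    mul_one] using hball
end

section
/- Let X be a strictly convex real normed space containing m linearly independent vectors (m ∈ ℕ, m ≥ 1). Let E ⊆ X satisfy B(θ,1) ⊆ E ⊆ B̄(θ,1), where B(θ,1) and B̄(θ,1) are the open and closed unit balls, and suppose E = A₁ ∪ … ∪ A_m where the sets A₁, …, A_m are pairwise congruent. Then either θ belongs to the interior of every A_i, or θ belongs to the interior of no A_i. -/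
/-!
If for every `i` some congruence of some `A k` onto `A i` moved `0`, say to `w i ≠ 0`, then `A i`
would lie in the closed unit ball around `w i`. These `m` balls do not cover the unit sphere. As
there are `m` independent vectors, some nonzero linear functional is nonpositive at every `w i`: it
can be made to vanish at all but one of them and then be given the right sign. Restricted to a
finite-dimensional subspace containing the `w i`, it attains its norm at a unit vector `x`, and
strict convexity gives `1 < ‖x - w i‖` for all `i`. So there is an `i` such that every congruence
of some `A k` onto `A i` fixes `0`, and hence `0` is interior to `A k` if and only if it is interior
to `A i`.
-/

open Metric

theorem exists_linearMap_ne_zero_forall_apply_nonpos {K V ι : Type*} [Field K] [LinearOrder K]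
    [IsStrictOrderedRing K] [AddCommGroup V] [Module K V] [Finite ι] [Nonempty ι] {v : ι → V}
    (hv : LinearIndependent K v) (w : ι → V) : ∃ f : V →ₗ[K] K, f ≠ 0 ∧ ∀ i, f (w i) ≤ 0 := by
  classical
  cases nonempty_fintype ι
  obtain ⟨i₀⟩ := ‹Nonempty ι›
  let s : Finset V := (Finset.univ.erase i₀).image w
  have hs : s.card < Fintype.card ι :=
    Finset.card_image_le.trans_lt (Finset.card_erase_lt_of_mem (Finset.mem_univ i₀))
  have hspan : Submodule.span K (s : Set V) ≠ ⊤ := fun h ↦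
    hs.not_ge <| by simpa using linearIndependent_le_span_finset v hv s h
  obtain ⟨f, hf, hker⟩ := Submodule.exists_le_ker_of_lt_top _ hspan.lt_top
  have hzero : ∀ i, i ≠ i₀ → f (w i) = 0 := fun i hi ↦
    hker <| Submodule.subset_span <| Finset.mem_coe.2 <| Finset.mem_image_of_mem w <| by simpa
  have of_sign : ∀ g : V →ₗ[K] K, g (w i₀) ≤ 0 → (∀ i, i ≠ i₀ → g (w i) = 0) →
      ∀ i, g (w i) ≤ 0 := fun g h₀ h i ↦ by
    rcases eq_or_ne i i₀ with rfl | hi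
    exacts [h₀, (h i hi).le]
  rcases le_total (f (w i₀)) 0 with h | h
  · exact ⟨f, hf, of_sign f h hzero⟩
  · exact ⟨-f, neg_ne_zero.2 hf, of_sign (-f) (by simpa) fun i hi ↦ by simp [hzero i hi]⟩

theorem exists_norm_eq_one_norm_apply_eq_opNorm {V F : Type*} [NormedAddCommGroup V]
    [NormedSpace ℝ V] [ProperSpace V] [Nontrivial V] [SeminormedAddCommGroup F] [NormedSpace ℝ F]
    (f : V →L[ℝ] F) : ∃ x, ‖x‖ = 1 ∧ ‖f x‖ = ‖f‖ := by
  obtain ⟨x, hx, hmax⟩ := (isCompact_sphere (0 : V) 1).exists_isMaxOn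
    (NormedSpace.sphere_nonempty.2 zero_le_one) f.continuous.norm.continuousOn
  have hx : ‖x‖ = 1 := mem_sphere_zero_iff_norm.1 hx
  refine ⟨x, hx, (f.unit_le_opNorm x hx.le).antisymm ?_⟩
  exact f.opNorm_le_of_unit_norm (norm_nonneg _) fun y hy ↦ hmax (mem_sphere_zero_iff_norm.2 hy)

theorem exists_norm_eq_one_apply_eq_opNorm {V : Type*} [NormedAddCommGroup V] [NormedSpace ℝ V]
    [ProperSpace V] [Nontrivial V] (f : StrongDual ℝ V) : ∃ x, ‖x‖ = 1 ∧ f x = ‖f‖ := by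
  obtain ⟨x, hx, hfx⟩ := exists_norm_eq_one_norm_apply_eq_opNorm f
  rcases abs_choice (f x) with h | h
  · exact ⟨x, hx, by rw [← hfx, Real.norm_eq_abs, h]⟩
  · exact ⟨-x, by rwa [norm_neg], by rw [← hfx, Real.norm_eq_abs, h, map_neg]⟩

section NormedSpace

variable {X ι : Type*} [NormedAddCommGroup X] [NormedSpace ℝ X]

theorem exists_strongDual_attaining_norm_forall_apply_nonpos [Finite ι] [Nonempty ι]
    {v : ι → X} (hv : LinearIndependent ℝ v) (w : ι → X) :
    ∃ (f : StrongDual ℝ X) (x : X), f ≠ 0 ∧ ‖x‖ = 1 ∧ f x = ‖f‖ ∧ ∀ i, f (w i) ≤ 0 := by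
  obtain ⟨g, hg, hgw⟩ := exists_linearMap_ne_zero_forall_apply_nonpos hv w
  obtain ⟨u, hu⟩ := DFunLike.ne_iff.1 hg
  -- `g` may be discontinuous on `X`, so pass to a finite-dimensional subspace on which `g ≠ 0`.
  let V : Submodule ℝ X := Submodule.span ℝ (insert u (Set.range w))
  have : FiniteDimensional ℝ V := .span_of_finite ℝ ((Set.finite_range w).insert u)
  have : ProperSpace V := FiniteDimensional.proper ℝ V
  let u' : V := ⟨u, Submodule.subset_span (Set.mem_insert u _)⟩
  have : Nontrivial V := ⟨u', 0, fun h ↦ hu <| by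
    simpa [u'] using congrArg (fun y : V ↦ g y) h⟩
  let gV : StrongDual ℝ V := LinearMap.toContinuousLinearMap (g.domRestrict V)
  obtain ⟨x, hx, hgx⟩ := exists_norm_eq_one_apply_eq_opNorm gV
  obtain ⟨f, hf, hfnorm⟩ := exists_extension_norm_eq V gV
  refine ⟨f, x, fun h ↦ hu ?_, hx, by rw [hf, hgx, hfnorm], fun i ↦ ?_⟩
  · simpa [h, gV, u'] using (hf u').symm
  · exact (hf ⟨w i, Submodule.subset_span (.inr ⟨i, rfl⟩)⟩).trans_le (hgw i)

theorem sphere_subset_closure_of_ball_subset {x : X} {r : ℝ} (hr : r ≠ 0) {s : Set X}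
    (hs : ball x r ⊆ s) : sphere x r ⊆ closure s :=
  calc
    sphere x r ⊆ closedBall x r := sphere_subset_closedBall
    _ = closure (ball x r) := (closure_ball x hr).symm
    _ ⊆ closure s := closure_mono hs

variable [StrictConvexSpace ℝ X]

theorem norm_lt_norm_sub_of_apply_nonpos {f : StrongDual ℝ X} (hf : f ≠ 0) {x w : X}
    (hx : f x = ‖f‖ * ‖x‖) (hw : w ≠ 0) (hfw : f w ≤ 0) : ‖x‖ < ‖x - w‖ := by
  by_contra! hle
  -- By strict convexity the midpoint of `x` and `x - w` is shorter than `x`, though `f` is at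
  -- least as large there.
  have hmid : ‖(1 / 2 : ℝ) • x + (1 / 2 : ℝ) • (x - w)‖ < ‖x‖ :=
    norm_combo_lt_of_ne le_rfl hle (fun h ↦ hw (sub_eq_self.1 h.symm)) (by norm_num)
      (by norm_num) (by norm_num)
  have : ‖f‖ * ‖x‖ < ‖f‖ * ‖x‖ := calc
    ‖f‖ * ‖x‖ ≤ f ((1 / 2 : ℝ) • x + (1 / 2 : ℝ) • (x - w)) := by
      simp only [map_add, map_smul, map_sub, smul_eq_mul]
      linarith
    _ ≤ ‖f‖ * ‖(1 / 2 : ℝ) • x + (1 / 2 : ℝ) • (x - w)‖ :=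
      (le_abs_self _).trans (f.le_opNorm _)
    _ < ‖f‖ * ‖x‖ := mul_lt_mul_of_pos_left hmid (norm_pos_iff.2 hf)
  exact this.false

variable [Finite ι] [Nonempty ι] {v : ι → X}

theorem exists_eq_zero_of_sphere_subset_iUnion_closedBall (hv : LinearIndependent ℝ v)
    {w : ι → X} (hw : sphere (0 : X) 1 ⊆ ⋃ i, closedBall (w i) 1) : ∃ i, w i = 0 := by
  by_contra! hne
  obtain ⟨f, x, hf, hx, hfx, hfw⟩ :=
    exists_strongDual_attaining_norm_forall_apply_nonpos hv w
  obtain ⟨i, hi⟩ := Set.mem_iUnion.1 (hw (mem_sphere_zero_iff_norm.2 hx))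
  have hlt : ‖x‖ < ‖x - w i‖ :=
    norm_lt_norm_sub_of_apply_nonpos hf (by rw [hfx, hx, mul_one]) (hne i) (hfw i)
  exact hlt.not_ge (hx ▸ mem_closedBall_iff_norm.1 hi)

theorem exists_forall_isometry_map_zero_of_subset_image (hv : LinearIndependent ℝ v)
    {A : ι → Set X} (hball : ∀ i, A i ⊆ closedBall 0 1)
    (hsphere : sphere 0 1 ⊆ closure (⋃ i, A i)) :
    ∃ i, ∀ k (f : X → X), Isometry f → A i ⊆ f '' A k → f 0 = 0 := by
  by_contra! hmoved
  choose k f hf hA hne using hmoved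
  have hAball : ∀ i, A i ⊆ closedBall (f i 0) 1 := fun i ↦ (hA i).trans <|
    Set.image_subset_iff.2 fun x hx ↦ by simpa [(hf i).dist_eq] using hball (k i) hx
  have hcover : sphere (0 : X) 1 ⊆ ⋃ i, closedBall (f i 0) 1 :=
    hsphere.trans <| closure_minimal (Set.iUnion_mono hAball)
      (isClosed_iUnion_of_finite fun _ ↦ isClosed_closedBall)
  obtain ⟨i, hi⟩ := exists_eq_zero_of_sphere_subset_iUnion_closedBall hv hcover
  exact hne i hi

end NormedSpace

theorem mem_interior_of_apply_mem_interior_image {X Y : Type*} [TopologicalSpace X]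
    [TopologicalSpace Y] {f : X → Y} (hf : Continuous f) (hinj : Function.Injective f) {s : Set X}
    {x : X} (hx : f x ∈ interior (f '' s)) : x ∈ interior s := by
  simpa only [hinj.preimage_image] using preimage_interior_subset_interior_preimage hf hx

theorem center_in_all_or_no_interiors_general {X ι : Type*} [NormedAddCommGroup X]
    [NormedSpace ℝ X] [StrictConvexSpace ℝ X] [Finite ι] {v : ι → X}
    (hv : LinearIndependent ℝ v) {A : ι → Set X} (hball : ∀ i, A i ⊆ closedBall 0 1)
    (hsphere : sphere 0 1 ⊆ closure (⋃ i, A i))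
    (hcongr : ∀ i j, ∃ f : X → X, Isometry f ∧ f '' A i = A j) :
    (∀ i, (0 : X) ∈ interior (A i)) ∨ ∀ i, (0 : X) ∉ interior (A i) := by
  cases isEmpty_or_nonempty ι
  · exact .inl isEmptyElim
  obtain ⟨i, hfix⟩ := exists_forall_isometry_map_zero_of_subset_image hv hball hsphere
  have hiff : ∀ k, (0 : X) ∈ interior (A k) ↔ (0 : X) ∈ interior (A i) := fun k ↦ by
    obtain ⟨f, hf, hfA⟩ := hcongr k i
    obtain ⟨g, hg, hgA⟩ := hcongr i k
    have hf0 : f 0 = 0 := hfix k f hf hfA.ge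
    have hfg0 : f (g 0) = 0 := hfix i (f ∘ g) (hf.comp hg) (by rw [Set.image_comp, hgA, hfA])
    have hg0 : g 0 = 0 := hf.injective (hfg0.trans hf0.symm)
    constructor <;> intro h
    · exact mem_interior_of_apply_mem_interior_image hg.continuous hg.injective (by rwa [hgA, hg0])
    · exact mem_interior_of_apply_mem_interior_image hf.continuous hf.injective (by rwa [hfA, hf0])
  by_cases h : (0 : X) ∈ interior (A i)
  · exact .inl fun k ↦ (hiff k).2 h
  · exact .inr fun k hk ↦ h ((hiff k).1 hk)

/-- Main proposition: Let `X` be a strictly convex real normed space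
containing `m ≥ 1` linearly independent vectors. Let `E` satisfy
`B(θ,1) ⊆ E ⊆ B̄(θ,1)` and `E = A 0 ∪ … ∪ A (m-1)` with the `A i` pairwise congruent.
Then either `θ` is in the interior of every `A i`, or of none of them. -/
theorem center_in_all_or_no_interiors
    {X : Type*} [NormedAddCommGroup X] [NormedSpace ℝ X]
    (hNCS : ∀ x y : X, x ≠ y → ‖x‖ = 1 → ‖y‖ = 1 →
      ∀ l : ℝ, 0 < l → l < 1 → ‖l • x + (1 - l) • y‖ < 1)
    (m : ℕ) (hm : 1 ≤ m) (hLI : ∃ v : Fin m → X, LinearIndependent ℝ v)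
    (E : Set X) (hE1 : Metric.ball (0 : X) 1 ⊆ E) (hE2 : E ⊆ Metric.closedBall (0 : X) 1)
    (A : Fin m → Set X) (hcover : E = ⋃ i, A i)
    (hcongr : ∀ i j, ∃ f : X → X, Function.Surjective f ∧
      (∀ x y : X, ‖f x - f y‖ = ‖x - y‖) ∧ f '' A i = A j) :
    (∀ i, (0 : X) ∈ interior (A i)) ∨ (∀ i, (0 : X) ∉ interior (A i)) := by
  have : StrictConvexSpace ℝ X := .of_norm_combo_lt_one fun x y hx hy hxy ↦
    ⟨1 / 2, 1 - 1 / 2, by norm_num, hNCS x y hxy hx hy (1 / 2) (by norm_num) (by norm_num)⟩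
  obtain ⟨v, hv⟩ := hLI
  subst hcover
  refine center_in_all_or_no_interiors_general hv (Set.iUnion_subset_iff.1 hE2)
    (sphere_subset_closure_of_ball_subset one_ne_zero hE1) fun i j ↦ ?_
  obtain ⟨f, -, hf, hfA⟩ := hcongr i j
  exact ⟨f, .of_dist_eq fun x y ↦ by simpa only [dist_eq_norm] using hf x y, hfA⟩
end

section
/- Let X = ℓ^∞ be the space of bounded real sequences with the supremum norm, let n ≥ 3 be odd, and for i = 1, …, n define A_i = {x ∈ B̄(θ,1) : −1 + 2(i−1)/n ≤ x₁ ≤ −1 + 2i/n}, where x₁ is the first coordinate of x. Then the sets A₁, …, A_n are pairwise congruent, their union equals the closed unit ball B̄(θ,1), θ belongs to the interior of A_{(n+1)/2}, and θ ∉ A_i for every i ≠ (n+1)/2. -/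
/-! Translating by a multiple of the unit vector along a coordinate changes that coordinate only.
Since the norm is a supremum, the coordinate can move freely within its own unit ball without
affecting the bounds on the others, so translations carry the slabs of the unit ball onto each
other. What remains is the division of `[-1, 1]` into `n` equal intervals: for odd `n`, the
midpoint `0` is interior to the middle interval and outside all the others. -/

open Set Metric Topology

open scoped ENNReal

section Slab

variable {ι : Type*} {E : ι → Type*} [∀ i, NormedAddCommGroup (E i)] {k : ι} {s t : Set (E k)}

theorem norm_add_single_le_max [DecidableEq ι] (x : lp E ∞) (k : ι) (a : E k) :
    ‖x + lp.single ∞ k a‖ ≤ max ‖x‖ ‖x k + a‖ := by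
  refine lp.norm_le_of_forall_le (le_max_of_le_left (norm_nonneg x)) fun j ↦ ?_
  rw [lp.coeFn_add, Pi.add_apply]
  obtain rfl | hj := eq_or_ne j k
  · rw [lp.single_apply_self]
    exact le_max_right _ _
  · rw [lp.single_apply_ne ∞ k a hj, add_zero]
    exact le_max_of_le_left (lp.norm_apply_le_norm ENNReal.top_ne_zero x j)

/-- The slab of the closed unit ball of an `ℓ^∞` sum consisting of the points whose `k`-th
coordinate lies in `s`. -/
def unitBallSlab (k : ι) (s : Set (E k)) : Set (lp E ∞) :=
  {x | ‖x‖ ≤ 1 ∧ x k ∈ s}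

theorem add_single_mem_unitBallSlab [DecidableEq ι] {x : lp E ∞} {a : E k} (hx : ‖x‖ ≤ 1)
    (ht : t ⊆ closedBall 0 1) (hxa : x k + a ∈ t) : x + lp.single ∞ k a ∈ unitBallSlab k t := by
  refine ⟨(norm_add_single_le_max x k a).trans
    (max_le hx (mem_closedBall_zero_iff.mp (ht hxa))), ?_⟩
  rwa [lp.coeFn_add, Pi.add_apply, lp.single_apply_self]

theorem image_add_single_unitBallSlab [DecidableEq ι] {a : E k} (hs : s ⊆ closedBall 0 1)
    (ht : t ⊆ closedBall 0 1) (hst : (· + a) '' s = t) :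
    (· + lp.single ∞ k a) '' unitBallSlab k s = unitBallSlab k t := by
  apply Subset.antisymm
  · rintro _ ⟨x, ⟨hx, hxs⟩, rfl⟩
    exact add_single_mem_unitBallSlab hx ht (hst ▸ mem_image_of_mem _ hxs)
  · rintro y ⟨hy, hyt⟩
    refine ⟨y + lp.single ∞ k (-a), add_single_mem_unitBallSlab hy hs ?_, ?_⟩
    · rwa [← hst, image_add_right] at hyt
    · simp only [lp.single_neg, neg_add_cancel_right]

theorem exists_isometry_image_unitBallSlab_eq {a : E k} (hs : s ⊆ closedBall 0 1)
    (ht : t ⊆ closedBall 0 1) (hst : (· + a) '' s = t) :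
    ∃ f : lp E ∞ → lp E ∞, Function.Surjective f ∧ (∀ x y, ‖f x - f y‖ = ‖x - y‖) ∧
      f '' unitBallSlab k s = unitBallSlab k t := by
  classical
  exact ⟨(· + lp.single ∞ k a), add_right_surjective _,
    fun x y ↦ by rw [add_sub_add_right_eq_sub], image_add_single_unitBallSlab hs ht hst⟩

theorem iUnion₂_unitBallSlab {α : Sort*} {κ : α → Sort*} (s : ∀ i, κ i → Set (E k)) :
    ⋃ (i) (j), unitBallSlab k (s i j) = unitBallSlab k (⋃ (i) (j), s i j) := by
  ext x
  simp [unitBallSlab]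

theorem unitBallSlab_closedBall (k : ι) :
    unitBallSlab k (closedBall (0 : E k) 1) = {x : lp E ∞ | ‖x‖ ≤ 1} :=
  Set.ext fun x ↦ and_iff_left_of_imp fun hx ↦ mem_closedBall_zero_iff.mpr
    ((lp.norm_apply_le_norm ENNReal.top_ne_zero x k).trans hx)

theorem unitBallSlab_mem_nhds_zero (hs : s ∈ 𝓝 0) : unitBallSlab k s ∈ 𝓝 (0 : lp E ∞) := by
  have hball : ∀ᶠ x : lp E ∞ in 𝓝 0, ‖x‖ ≤ 1 :=
    continuous_norm.continuousAt.eventually_le_const (by simp)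
  have heval : ∀ᶠ x : lp E ∞ in 𝓝 0, x k ∈ s :=
    (lp.lipschitzWith_one_eval ∞ k).continuous.continuousAt.preimage_mem_nhds hs
  exact hball.and heval

end Slab

section Subdivision

theorem biUnion_Icc_add_mul {R : Type*} [Ring R] [LinearOrder R] [IsStrictOrderedRing R]
    (a : R) {h : R} (hh : 0 ≤ h) {n : ℕ} (hn : 1 ≤ n) :
    ⋃ i ∈ Finset.Icc 1 n, Icc (a + ((i : R) - 1) * h) (a + i * h) = Icc a (a + n * h) := by
  induction n, hn using Nat.le_induction with
  | base => simp
  | succ n hn ih =>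
    rw [← Finset.insert_Icc_right_eq_Icc_add_one (by lia), Finset.set_biUnion_insert, ih,
      union_comm, Nat.cast_add_one, add_sub_cancel_right, add_one_mul, ← add_assoc,
      Icc_union_Icc_eq_Icc]
    · exact le_add_of_nonneg_right (mul_nonneg n.cast_nonneg hh)
    · exact le_add_of_nonneg_right hh

/-- The `i`-th of the `n` closed intervals of equal length that subdivide `[-1, 1]`, counted
from `1` to `n`. -/
def subdivisionCell (n i : ℕ) : Set ℝ :=
  Icc (-1 + 2 * ((i : ℝ) - 1) / n) (-1 + 2 * (i : ℝ) / n)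

variable {n i : ℕ}

theorem biUnion_subdivisionCell (hn : 0 < n) :
    ⋃ i ∈ Finset.Icc 1 n, subdivisionCell n i = closedBall 0 1 := by
  have hn' : (n : ℝ) ≠ 0 := Nat.cast_ne_zero.mpr hn.ne'
  calc ⋃ i ∈ Finset.Icc 1 n, subdivisionCell n i
      = ⋃ i ∈ Finset.Icc 1 n, Icc (-1 + ((i : ℝ) - 1) * (2 / n)) (-1 + (i : ℝ) * (2 / n)) := by
        simp only [subdivisionCell, mul_div_assoc', mul_comm]
    _ = Icc (-1 : ℝ) (-1 + n * (2 / n)) := biUnion_Icc_add_mul (-1) (by positivity) hn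
    _ = closedBall 0 1 := by
        rw [mul_div_cancel₀ _ hn', Real.closedBall_eq_Icc]
        norm_num

theorem subdivisionCell_subset_closedBall (hi : 1 ≤ i) (hin : i ≤ n) :
    subdivisionCell n i ⊆ closedBall 0 1 := by
  rw [← biUnion_subdivisionCell (hi.trans hin)]
  exact subset_biUnion_of_mem (u := subdivisionCell n) (Finset.mem_Icc.mpr ⟨hi, hin⟩)

theorem image_add_subdivisionCell (n i j : ℕ) :
    (· + 2 * ((j : ℝ) - i) / n) '' subdivisionCell n i = subdivisionCell n j := by
  rw [subdivisionCell, image_add_const_Icc, subdivisionCell]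
  congr 1 <;> ring

theorem zero_mem_subdivisionCell_iff (hn : 0 < n) :
    0 ∈ subdivisionCell n i ↔ 2 * i ≤ n + 2 ∧ n ≤ 2 * i := by
  have hn' : (0 : ℝ) < n := Nat.cast_pos.mpr hn
  rw [subdivisionCell, mem_Icc, neg_add_nonpos_iff, le_neg_add_iff_le, div_le_one hn',
    one_le_div hn', mul_sub_one, sub_le_iff_le_add]
  norm_cast

theorem subdivisionCell_mem_nhds_zero_iff (hn : 0 < n) :
    subdivisionCell n i ∈ 𝓝 0 ↔ 2 * i < n + 2 ∧ n < 2 * i := by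
  have hn' : (0 : ℝ) < n := Nat.cast_pos.mpr hn
  rw [subdivisionCell, Icc_mem_nhds_iff, mem_Ioo, neg_add_neg_iff, lt_neg_add_iff_lt,
    div_lt_one hn', one_lt_div hn', mul_sub_one, sub_lt_iff_lt_add]
  norm_cast

theorem zero_mem_subdivisionCell_iff_of_odd (hn : Odd n) :
    0 ∈ subdivisionCell n i ↔ i = (n + 1) / 2 := by
  rw [zero_mem_subdivisionCell_iff hn.pos]
  grind

theorem subdivisionCell_mem_nhds_zero_iff_of_odd (hn : Odd n) :
    subdivisionCell n i ∈ 𝓝 0 ↔ i = (n + 1) / 2 := by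
  rw [subdivisionCell_mem_nhds_zero_iff hn.pos]
  grind

end Subdivision

theorem linf_slab_cover_general {ι : Type*} (k : ι) {n : ℕ} (hodd : Odd n) :
    (∀ i j, 1 ≤ i → i ≤ n → 1 ≤ j → j ≤ n →
      ∃ f : lp (fun _ : ι ↦ ℝ) ∞ → lp (fun _ : ι ↦ ℝ) ∞,
        Function.Surjective f ∧ (∀ x y, ‖f x - f y‖ = ‖x - y‖) ∧
          f '' unitBallSlab k (subdivisionCell n i) = unitBallSlab k (subdivisionCell n j)) ∧
    (⋃ i ∈ Finset.Icc 1 n, unitBallSlab k (subdivisionCell n i)) =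
      {x : lp (fun _ : ι ↦ ℝ) ∞ | ‖x‖ ≤ 1} ∧
    (0 : lp (fun _ : ι ↦ ℝ) ∞) ∈ interior (unitBallSlab k (subdivisionCell n ((n + 1) / 2))) ∧
    (∀ i, i ≠ (n + 1) / 2 →
      (0 : lp (fun _ : ι ↦ ℝ) ∞) ∉ unitBallSlab k (subdivisionCell n i)) := by
  refine ⟨fun i j hi hin hj hjn ↦ ?_, ?_, ?_, fun i hne h0 ↦ ?_⟩
  · exact exists_isometry_image_unitBallSlab_eq (subdivisionCell_subset_closedBall hi hin)
      (subdivisionCell_subset_closedBall hj hjn) (image_add_subdivisionCell n i j)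
  · rw [iUnion₂_unitBallSlab, biUnion_subdivisionCell hodd.pos, unitBallSlab_closedBall]
  · rw [mem_interior_iff_mem_nhds]
    exact unitBallSlab_mem_nhds_zero ((subdivisionCell_mem_nhds_zero_iff_of_odd hodd).mpr rfl)
  · exact hne ((zero_mem_subdivisionCell_iff_of_odd hodd).mp h0.2)

/-- In `ℓ^∞` (bounded real sequences with the sup norm), for odd `n ≥ 3`,
the slabs `A i = {x ∈ B̄(θ,1) : -1 + 2(i-1)/n ≤ x₁ ≤ -1 + 2i/n}`, `i = 1, …, n`, are
pairwise congruent, their union is the closed unit ball, `θ` lies in the interior of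
the middle slab `A ((n+1)/2)`, and `θ ∉ A i` for every other `i`. -/
theorem linf_slab_cover
    (n : ℕ) (hn3 : 3 ≤ n) (hodd : Odd n)
    (A : ℕ → Set (lp (fun _ : ℕ => ℝ) ⊤))
    (hA : ∀ i, A i = {x : lp (fun _ : ℕ => ℝ) ⊤ | ‖x‖ ≤ 1 ∧
      -1 + 2 * ((i : ℝ) - 1) / n ≤ (x : ∀ _ : ℕ, ℝ) 0 ∧
      (x : ∀ _ : ℕ, ℝ) 0 ≤ -1 + 2 * (i : ℝ) / n}) :
    (∀ i j, 1 ≤ i → i ≤ n → 1 ≤ j → j ≤ n →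
      ∃ f : lp (fun _ : ℕ => ℝ) ⊤ → lp (fun _ : ℕ => ℝ) ⊤,
        Function.Surjective f ∧ (∀ x y, ‖f x - f y‖ = ‖x - y‖) ∧ f '' A i = A j) ∧
    (⋃ i ∈ Finset.Icc 1 n, A i) = {x : lp (fun _ : ℕ => ℝ) ⊤ | ‖x‖ ≤ 1} ∧
    (0 : lp (fun _ : ℕ => ℝ) ⊤) ∈ interior (A ((n + 1) / 2)) ∧
    (∀ i, 1 ≤ i → i ≤ n → i ≠ (n + 1) / 2 → (0 : lp (fun _ : ℕ => ℝ) ⊤) ∉ A i) := by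
  obtain rfl : A = fun i ↦ unitBallSlab 0 (subdivisionCell n i) := funext hA
  obtain ⟨hcongr, hcover, hmid, hother⟩ := linf_slab_cover_general (0 : ℕ) hodd
  exact ⟨hcongr, hcover, hmid, fun i _ _ ↦ hother i⟩
end

section
/- Let X be a nontrivial real normed space. Set A_θ = B̄(θ, 1/2) and, for each y ∈ X with ‖y‖ = 1/2, set A_y = B̄(y, 1/2). Then: (i) the closed unit ball B̄(θ,1) equals the union of A_θ and all the A_y; (ii) any two sets of this family are congruent; (iii) θ belongs to the interior of A_θ; and (iv) for every y with ‖y‖ = 1/2, θ does not belong to the interior of A_y. -/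
/-! A point `z` at distance between `r` and `r + s` from `x` is within `s` of the point where the
segment from `x` to `z` meets the sphere of radius `r` about `x`; with `r = s = 1/2` this gives the
covering. Translations are the required motions. Each `A_y` has `θ` on its boundary sphere, so only
`A_θ` contains `θ` in its interior. -/

open Metric

section NormedAddTorsor

variable {V P : Type*} [SeminormedAddCommGroup V] [PseudoMetricSpace P]

theorem exists_isometryEquiv_image_closedBall_eq [NormedAddTorsor V P] (c c' : P) (r : ℝ) :
    ∃ f : P ≃ᵢ P, f '' closedBall c r = closedBall c' r :=
  ⟨IsometryEquiv.constVAdd (c' -ᵥ c), by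
    rw [IsometryEquiv.image_closedBall, IsometryEquiv.constVAdd_apply, vsub_vadd]⟩

variable [NormedSpace ℝ V]

theorem exists_mem_sphere_dist_eq_sub [NormedAddTorsor V P] {x z : P} {r : ℝ} (hr : 0 ≤ r)
    (hrz : r ≤ dist x z) :
    ∃ y ∈ sphere x r, dist z y = dist x z - r := by
  have ratio_mul : r / dist x z * dist x z = r :=
    div_mul_cancel_of_imp fun h => le_antisymm (hrz.trans_eq h) hr
  have ratio_nonneg : 0 ≤ r / dist x z := by positivity
  have ratio_le_one : r / dist x z ≤ 1 := div_le_one_of_le₀ hrz dist_nonneg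
  refine ⟨AffineMap.lineMap x z (r / dist x z), ?_, ?_⟩
  · rw [mem_sphere, dist_lineMap_left, Real.norm_of_nonneg ratio_nonneg, ratio_mul]
  · rw [dist_right_lineMap, Real.norm_of_nonneg (sub_nonneg.mpr ratio_le_one), sub_mul, one_mul,
      ratio_mul]

theorem closedBall_add_eq_union_biUnion_sphere [NormedAddTorsor V P] (x : P) {r s : ℝ}
    (hr : 0 ≤ r) (hs : 0 ≤ s) :
    closedBall x (r + s) = closedBall x r ∪ ⋃ y ∈ sphere x r, closedBall y s := by
  apply Set.Subset.antisymm
  · intro z hz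
    rcases le_total (dist z x) r with hzr | hrz
    · exact Or.inl hzr
    · obtain ⟨y, hy, hzy⟩ := exists_mem_sphere_dist_eq_sub hr (hrz.trans_eq (dist_comm z x))
      refine Or.inr (Set.mem_biUnion hy ?_)
      rw [mem_closedBall, hzy, dist_comm x z, sub_le_iff_le_add']
      exact hz
  · refine Set.union_subset (closedBall_subset_closedBall (le_add_of_nonneg_right hs))
      (Set.iUnion₂_subset fun y hy => closedBall_subset_closedBall' ?_)
    rw [mem_sphere.mp hy, add_comm]

end NormedAddTorsor

theorem notMem_interior_closedBall_of_mem_sphere {X : Type*} [SeminormedAddCommGroup X]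
    [NormedSpace ℝ X] {x y : X} {r : ℝ} (hr : r ≠ 0) (hxy : x ∈ sphere y r) :
    x ∉ interior (closedBall y r) := by
  rw [interior_closedBall y hr, mem_ball, mem_sphere.mp hxy]
  exact lt_irrefl r

theorem universal_ball_cover_general {X : Type*} [SeminormedAddCommGroup X] [NormedSpace ℝ X]
    {r : ℝ} (hr : 0 < r) :
    (closedBall (0 : X) (r + r) =
      closedBall (0 : X) r ∪ ⋃ y ∈ {y : X | ‖y‖ = r}, closedBall y r) ∧
    (∀ c c' : X, ∃ f : X → X, Function.Surjective f ∧ (∀ x y : X, ‖f x - f y‖ = ‖x - y‖) ∧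
      f '' closedBall c r = closedBall c' r) ∧
    (0 : X) ∈ interior (closedBall (0 : X) r) ∧
    (∀ y : X, ‖y‖ = r → (0 : X) ∉ interior (closedBall y r)) := by
  refine ⟨?_, fun c c' => ?_, ?_, fun y hy => ?_⟩
  · simpa only [sphere, dist_zero_right] using
      closedBall_add_eq_union_biUnion_sphere (0 : X) hr.le hr.le
  · obtain ⟨f, hf⟩ := exists_isometryEquiv_image_closedBall_eq c c' r
    exact ⟨f, f.surjective, fun x y => by simp only [← dist_eq_norm, f.dist_eq], hf⟩
  · exact mem_interior_iff_mem_nhds.mpr (closedBall_mem_nhds 0 hr)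
  · exact notMem_interior_closedBall_of_mem_sphere hr.ne' (by rwa [mem_sphere, dist_zero_left])

/-- In a nontrivial real normed space `X`, with `A_θ = B̄(θ, 1/2)` and
`A_y = B̄(y, 1/2)` for each `y` with `‖y‖ = 1/2`: (i) the closed unit ball is the union
of `A_θ` and all the `A_y`; (ii) any two sets of this family are congruent; (iii) `θ`
is in the interior of `A_θ`; (iv) `θ` is in the interior of no `A_y`. -/
theorem universal_ball_cover
    {X : Type*} [NormedAddCommGroup X] [NormedSpace ℝ X] [Nontrivial X] :
    (Metric.closedBall (0 : X) 1 =
      Metric.closedBall (0 : X) (1/2) ∪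
        (⋃ y ∈ {y : X | ‖y‖ = 1/2}, Metric.closedBall y (1/2))) ∧
    (∀ c c' : X, (c = 0 ∨ ‖c‖ = 1/2) → (c' = 0 ∨ ‖c'‖ = 1/2) →
      ∃ f : X → X, Function.Surjective f ∧ (∀ x y : X, ‖f x - f y‖ = ‖x - y‖) ∧
        f '' Metric.closedBall c (1/2) = Metric.closedBall c' (1/2)) ∧
    (0 : X) ∈ interior (Metric.closedBall (0 : X) (1/2)) ∧
    (∀ y : X, ‖y‖ = 1/2 → (0 : X) ∉ interior (Metric.closedBall y (1/2))) := by
  obtain ⟨cover, congruent, mem, notMem⟩ := universal_ball_cover_general (X := X) one_half_pos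
  exact ⟨by rwa [add_halves] at cover, fun c c' _ _ => congruent c c', mem, notMem⟩
end

section
/- There exists a countable family (A_i)_{i ∈ ℕ} of subsets of the closed unit ball B̄(θ,1) of ℓ² such that: each A_i is convex; the sets are pairwise congruent; their union equals B̄(θ,1); θ belongs to the interior of A₀; and θ does not belong to the interior of A_i for any i ≥ 1. -/
/-!
Intersect the closed ball of radius `r` about the origin with the one about a point `c`, where
`0 < ‖c‖ < r`, and keep the part where `⟪c, y⟫ ≥ 0`. The origin lies on the flat face of this
convex piece, hence not in its interior, whereas `c` is an interior point. Moreover the piece lies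
in the ball about `c` as well, so translating it by `-c` keeps it inside the ball about the origin
and brings an interior point to the origin.

Pieces with equally long vectors `c` are congruent by reflections. A point `y ≠ 0` of the ball is
strictly inside the constraints `‖y - c‖ < r` and `⟪c, y⟫ > 0` when `c` is a positive multiple of
`y`. These are open conditions on `c`, so countably many pieces, with `c` dense in a sphere,
already cover the ball; the translate of one of them is added to the cover.
-/

open Metric Set TopologicalSpace
open scoped RealInnerProductSpace

theorem separableSpace_of_hilbertBasis {ι 𝕜 E : Type*} [RCLike 𝕜] [NormedAddCommGroup E]
    [InnerProductSpace 𝕜 E] [Countable ι] (b : HilbertBasis ι 𝕜 E) : SeparableSpace E := by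
  have hspan : Dense (Submodule.span 𝕜 (range b) : Set E) :=
    Submodule.dense_iff_topologicalClosure_eq_top.2 b.dense_span
  rw [← isSeparable_univ_iff, ← hspan.closure_eq]
  exact ((countable_range b).isSeparable.span (R := 𝕜)).closure

theorem nontrivial_lp {α : Type*} {E : α → Type*} [∀ i, NormedAddCommGroup (E i)]
    (p : ENNReal) (i : α) [Nontrivial (E i)] : Nontrivial (lp E p) := by
  classical
  refine Function.Injective.nontrivial (f := lp.single p i) fun a b hab ↦ ?_
  simpa only [lp.single_apply_self] using congr($hab i)

theorem exists_denseRange_sphere {E : Type*} [NormedAddCommGroup E] [NormedSpace ℝ E]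
    [SeparableSpace E] [Nontrivial E] (x : E) {s : ℝ} (hs : 0 ≤ s) :
    ∃ c : ℕ → sphere x s, DenseRange c := by
  have : Nonempty (sphere x s) := (NormedSpace.sphere_nonempty.2 hs).to_subtype
  have : SeparableSpace (sphere x s) := (IsSeparable.of_separableSpace _).separableSpace
  exact exists_dense_seq _

section CutLens

variable {E : Type*} [NormedAddCommGroup E] [InnerProductSpace ℝ E]

/-- The part of the lens `closedBall 0 r ∩ closedBall c r` cut off by the hyperplane through the
origin orthogonal to `c`, on the side of `c`: the shape of the pieces of the cover. -/
def cutLens (r : ℝ) (c : E) : Set E :=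
  closedBall 0 r ∩ closedBall c r ∩ {y | 0 ≤ ⟪c, y⟫}

theorem mem_cutLens {r : ℝ} {c y : E} :
    y ∈ cutLens r c ↔ ‖y‖ ≤ r ∧ dist y c ≤ r ∧ 0 ≤ ⟪c, y⟫ := by
  rw [← mem_closedBall_zero_iff, ← and_assoc]
  rfl

theorem convex_cutLens (r : ℝ) (c : E) : Convex ℝ (cutLens r c) :=
  ((convex_closedBall 0 r).inter (convex_closedBall c r)).inter
    (convex_halfSpace_ge (innerₗ E c).isLinear 0)

theorem cutLens_subset_closedBall_zero (r : ℝ) (c : E) : cutLens r c ⊆ closedBall 0 r :=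
  fun _ hy ↦ mem_closedBall_zero_iff.2 (mem_cutLens.1 hy).1

theorem image_sub_cutLens_subset_closedBall_zero (r : ℝ) (c : E) :
    (· - c) '' cutLens r c ⊆ closedBall 0 r := by
  rintro _ ⟨y, hy, rfl⟩
  exact mem_closedBall_zero_iff.2 ((dist_eq_norm y c).symm.trans_le (mem_cutLens.1 hy).2.1)

theorem preimage_cutLens {F : Type*} [NormedAddCommGroup F] [InnerProductSpace ℝ F]
    (f : E →ₗᵢ[ℝ] F) (r : ℝ) (c : E) : f ⁻¹' cutLens r (f c) = cutLens r c := by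
  ext y
  simp only [mem_preimage, mem_cutLens, f.norm_map, f.dist_map, f.inner_map_map]

theorem exists_linearIsometryEquiv_image_cutLens {c c' : E} (h : ‖c‖ = ‖c'‖) (r : ℝ) :
    ∃ f : E ≃ₗᵢ[ℝ] E, f '' cutLens r c = cutLens r c' := by
  let f : E ≃ₗᵢ[ℝ] E := (ℝ ∙ (c - c'))ᗮ.reflection
  have hf : f c = c' := Submodule.reflection_sub h
  refine ⟨f, ?_⟩
  rw [← hf, ← preimage_cutLens f.toLinearIsometry r c]
  exact image_preimage_eq _ f.surjective

theorem mem_interior_cutLens_self {r : ℝ} {c : E} (hc : c ≠ 0) (hcr : ‖c‖ < r) :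
    c ∈ interior (cutLens r c) := by
  have hr : 0 < r := (norm_nonneg c).trans_lt hcr
  have half_space : {y | 0 ≤ ⟪c, y⟫} ∈ nhds c :=
    (continuous_const.inner continuous_id).continuousAt.eventually_const_le
      (real_inner_self_pos.2 hc)
  rw [mem_interior_iff_mem_nhds]
  exact Filter.inter_mem
    (Filter.inter_mem (closedBall_mem_nhds_of_mem (mem_ball_zero_iff.2 hcr))
      (closedBall_mem_nhds c hr)) half_space

theorem zero_notMem_interior_cutLens (r : ℝ) {c : E} (hc : c ≠ 0) :
    (0 : E) ∉ interior (cutLens r c) := by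
  intro h
  -- A linear functional with a local minimum vanishes.
  have hmin : IsLocalMin (innerSL ℝ c) 0 := by
    filter_upwards [mem_interior_iff_mem_nhds.1 h] with y hy
    simpa only [map_zero, innerSL_apply_apply] using (mem_cutLens.1 hy).2.2
  have hzero : innerSL ℝ c = 0 := hmin.hasFDerivAt_eq_zero (innerSL ℝ c).hasFDerivAt
  exact hc (inner_self_eq_zero.1 (congr($hzero c)))

theorem exists_mem_sphere_dist_lt_inner_pos {r s : ℝ} (hs : 0 < s) (hsr : s ≤ r) {y : E}
    (hy : y ≠ 0) (hyr : ‖y‖ ≤ r) : ∃ c ∈ sphere (0 : E) s, dist y c < r ∧ 0 < ⟪c, y⟫ := by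
  have hy_pos : 0 < ‖y‖ := norm_pos_iff.2 hy
  refine ⟨(s / ‖y‖) • y, ?_, ?_, ?_⟩
  · rw [mem_sphere_zero_iff_norm, norm_smul, Real.norm_of_nonneg (by positivity),
      div_mul_cancel₀ _ hy_pos.ne']
  · calc dist y ((s / ‖y‖) • y) = ‖(1 - s / ‖y‖) • y‖ := by
          rw [dist_eq_norm, sub_smul, one_smul]
      _ = |(1 - s / ‖y‖) * ‖y‖| := by
          rw [norm_smul, Real.norm_eq_abs, abs_mul, abs_norm]
      _ = |‖y‖ - s| := by rw [sub_mul, one_mul, div_mul_cancel₀ _ hy_pos.ne']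
      _ < r := abs_sub_lt_iff.2 ⟨by linarith, by linarith⟩
  · rw [real_inner_smul_left]
    exact mul_pos (by positivity) (real_inner_self_pos.2 hy)

theorem closedBall_subset_iUnion_cutLens {ι : Type*} [Nonempty ι] {r s : ℝ} (hs : 0 < s)
    (hsr : s ≤ r) {c : ι → sphere (0 : E) s} (hc : DenseRange c) :
    closedBall 0 r ⊆ ⋃ i, cutLens r (c i : E) := by
  intro y hy
  rw [mem_closedBall_zero_iff] at hy
  rw [mem_iUnion]
  rcases eq_or_ne y 0 with rfl | hy_ne
  · obtain ⟨i⟩ := ‹Nonempty ι›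
    refine ⟨i, mem_cutLens.2 ⟨hy, ?_, (inner_zero_right _).ge⟩⟩
    rwa [dist_zero_left, norm_eq_of_mem_sphere]
  · obtain ⟨p, hp, hp_dist, hp_inner⟩ :=
      exists_mem_sphere_dist_lt_inner_pos hs hsr hy_ne hy
    have hopen : IsOpen {q : sphere (0 : E) s | dist y q < r ∧ 0 < ⟪(q : E), y⟫} := by
      apply IsOpen.and <;> apply isOpen_lt <;> fun_prop
    obtain ⟨i, hi_dist, hi_inner⟩ := hc.exists_mem_open hopen ⟨⟨p, hp⟩, hp_dist, hp_inner⟩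
    exact ⟨i, mem_cutLens.2 ⟨hy, hi_dist.le, hi_inner.le⟩⟩

/-- The cover of the ball: the pieces `cutLens r (c k)`, preceded by the translate of the first of
them that carries the interior point `c 0` to the origin. -/
def cutLensCover (r : ℝ) (c : ℕ → E) : ℕ → Set E
  | 0 => (· - c 0) '' cutLens r (c 0)
  | k + 1 => cutLens r (c k)

theorem cutLensCover_subset_closedBall (r : ℝ) (c : ℕ → E) :
    ∀ i, cutLensCover r c i ⊆ closedBall 0 r
  | 0 => image_sub_cutLens_subset_closedBall_zero r (c 0)
  | k + 1 => cutLens_subset_closedBall_zero r (c k)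

theorem convex_cutLensCover (r : ℝ) (c : ℕ → E) : ∀ i, Convex ℝ (cutLensCover r c i)
  | 0 => by
    simpa only [cutLensCover, sub_eq_neg_add, image_add_left] using
      (convex_cutLens r (c 0)).translate (-c 0)
  | k + 1 => convex_cutLens r (c k)

theorem exists_isometryEquiv_image_cutLens_eq_cutLensCover (r : ℝ) {c : ℕ → E}
    (hc : ∀ k, ‖c 0‖ = ‖c k‖) : ∀ i, ∃ f : E ≃ᵢ E, f '' cutLens r (c 0) = cutLensCover r c i
  | 0 => ⟨IsometryEquiv.subRight (c 0), rfl⟩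
  | k + 1 =>
    let ⟨f, hf⟩ := exists_linearIsometryEquiv_image_cutLens (hc k) r
    ⟨f.toIsometryEquiv, hf⟩

theorem exists_isometryEquiv_image_cutLensCover (r : ℝ) {c : ℕ → E} (hc : ∀ k, ‖c 0‖ = ‖c k‖)
    (i j : ℕ) : ∃ f : E ≃ᵢ E, f '' cutLensCover r c i = cutLensCover r c j := by
  obtain ⟨f, hf⟩ := exists_isometryEquiv_image_cutLens_eq_cutLensCover r hc i
  obtain ⟨g, hg⟩ := exists_isometryEquiv_image_cutLens_eq_cutLensCover r hc j
  refine ⟨f.symm.trans g, ?_⟩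
  calc g ∘ f.symm '' cutLensCover r c i = g '' (f.symm '' (f '' cutLens r (c 0))) := by
        rw [image_comp, hf]
    _ = cutLensCover r c j := by rw [f.image_symm, preimage_image_eq _ f.injective, hg]

theorem iUnion_cutLensCover {r s : ℝ} (hs : 0 < s) (hsr : s ≤ r) {c : ℕ → sphere (0 : E) s}
    (hc : DenseRange c) : ⋃ i, cutLensCover r (fun k ↦ (c k : E)) i = closedBall 0 r := by
  refine (iUnion_subset (cutLensCover_subset_closedBall r _)).antisymm ?_
  exact (closedBall_subset_iUnion_cutLens hs hsr hc).trans
    (iUnion_subset fun k ↦ subset_iUnion (cutLensCover r (fun k ↦ (c k : E))) (k + 1))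

theorem zero_mem_interior_cutLensCover_zero {r : ℝ} {c : ℕ → E} (hc : c 0 ≠ 0)
    (hcr : ‖c 0‖ < r) : 0 ∈ interior (cutLensCover r c 0) := by
  change 0 ∈ interior (Homeomorph.subRight (c 0) '' cutLens r (c 0))
  rw [← Homeomorph.image_interior]
  exact ⟨c 0, mem_interior_cutLens_self hc hcr, sub_self (c 0)⟩

theorem zero_notMem_interior_cutLensCover (r : ℝ) {c : ℕ → E} (hc : ∀ k, c k ≠ 0) :
    ∀ i, 1 ≤ i → 0 ∉ interior (cutLensCover r c i)
  | k + 1, _ => zero_notMem_interior_cutLens r (hc k)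

theorem hilbert_countable_congruent_cover_general [SeparableSpace E] [Nontrivial E] {r : ℝ}
    (hr : 0 < r) :
    ∃ A : ℕ → Set E,
      (∀ i, A i ⊆ closedBall (0 : E) r) ∧
      (∀ i, Convex ℝ (A i)) ∧
      (∀ i j, ∃ f : E → E,
        Function.Surjective f ∧ (∀ x y, ‖f x - f y‖ = ‖x - y‖) ∧ f '' A i = A j) ∧
      (⋃ i, A i) = closedBall (0 : E) r ∧
      (0 : E) ∈ interior (A 0) ∧
      (∀ i, 1 ≤ i → (0 : E) ∉ interior (A i)) := by
  have hs : 0 < r / 2 := half_pos hr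
  obtain ⟨d, hd⟩ := exists_denseRange_sphere (0 : E) hs.le
  let c (k : ℕ) : E := d k
  have hnorm (k : ℕ) : ‖c k‖ = r / 2 := norm_eq_of_mem_sphere (d k)
  have hne (k : ℕ) : c k ≠ 0 := ne_zero_of_mem_sphere hs.ne' (d k)
  refine ⟨cutLensCover r c, cutLensCover_subset_closedBall r c, convex_cutLensCover r c,
    fun i j ↦ ?_, iUnion_cutLensCover hs (half_le_self hr.le) hd,
    zero_mem_interior_cutLensCover_zero (hne 0) ((hnorm 0).trans_lt (half_lt_self hr)),
    zero_notMem_interior_cutLensCover r hne⟩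
  obtain ⟨f, hf⟩ := exists_isometryEquiv_image_cutLensCover r
    (fun k ↦ (hnorm 0).trans (hnorm k).symm) i j
  exact ⟨f, f.surjective, fun x y ↦ by simpa only [dist_eq_norm] using f.dist_eq x y, hf⟩

end CutLens

/-- There is a countable family `(A i)_{i ∈ ℕ}` of subsets of the closed
unit ball of `ℓ²` such that each `A i` is convex, the sets are pairwise congruent,
their union is the closed unit ball, `θ ∈ interior (A 0)`, and `θ ∉ interior (A i)`
for every `i ≥ 1`. -/
theorem hilbert_countable_congruent_cover :
    ∃ A : ℕ → Set (lp (fun _ : ℕ => ℝ) 2),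
      (∀ i, A i ⊆ Metric.closedBall (0 : lp (fun _ : ℕ => ℝ) 2) 1) ∧
      (∀ i, Convex ℝ (A i)) ∧
      (∀ i j, ∃ f : lp (fun _ : ℕ => ℝ) 2 → lp (fun _ : ℕ => ℝ) 2,
        Function.Surjective f ∧ (∀ x y, ‖f x - f y‖ = ‖x - y‖) ∧ f '' A i = A j) ∧
      (⋃ i, A i) = Metric.closedBall (0 : lp (fun _ : ℕ => ℝ) 2) 1 ∧
      (0 : lp (fun _ : ℕ => ℝ) 2) ∈ interior (A 0) ∧
      (∀ i, 1 ≤ i → (0 : lp (fun _ : ℕ => ℝ) 2) ∉ interior (A i)) := by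
  have : SeparableSpace (lp (fun _ : ℕ => ℝ) 2) :=
    separableSpace_of_hilbertBasis ⟨LinearIsometryEquiv.refl ℝ _⟩
  have : Nontrivial (lp (fun _ : ℕ => ℝ) 2) := nontrivial_lp 2 0
  exact hilbert_countable_congruent_cover_general one_pos
end

section
/- Let K = B̄(θ,1) be the closed unit disk in the Euclidean plane ℝ², let n ≥ 2, and let A₁, …, A_n be closed convex subsets of ℝ² such that K = A₁ ∪ … ∪ A_n, the interiors of the A_i are pairwise disjoint, and the parts are pairwise similar: for all i, j there exist a bijection f : ℝ² → ℝ² and α > 0 with ‖f(x) − f(y)‖ = α‖x − y‖ for all x, y and f(A_i) = A_j. Then it is not the case that the centre θ belongs to the interior of exactly one of the sets A₁, …, A_n. -/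
/-!
The argument works in every real inner product space of dimension at least two. Call a set *small*
(`IsHyperplaneCovered`) if finitely many hyperplanes cover it; spheres are not small. Two convex
bodies with disjoint interiors meet inside a separating hyperplane, so the boundary points of a part
that lie in the open ball form a small set. Suppose that a similarity `f` maps a part `P` onto a
part `Q` and moves the centre `c`, and let `S` be the sphere bounding the ball. The points of
`P ∩ S` are boundary points of `P`, so `f` sends them to boundary points of `Q` on the sphere
`f(S)`. Those in the open ball form a small set, and so do those on `S`, because two spheres with
distinct centres meet inside a hyperplane. Similarities are affine, so `P ∩ S` itself is small. As
`S` is not small, there is a part `P` all of whose similarities onto the parts fix `c`. Hence if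
`c` is interior to one part, it is interior to `P`, and then to every part.
-/

open Metric Set Module
open scoped RealInnerProductSpace

theorem map_mem_interior_iff_of_image_eq {X Y : Type*} [TopologicalSpace X] [TopologicalSpace Y]
    {f : X ≃ₜ Y} {S : Set X} {T : Set Y} (hf : f '' S = T) {x : X} :
    f x ∈ interior T ↔ x ∈ interior S := by
  rw [← hf, ← f.image_interior]
  exact f.injective.mem_set_image

theorem exists_ne_mem_of_mem_frontier_of_mem_interior_iUnion {X ι : Type*} [TopologicalSpace X]
    [Finite ι] {A : ι → Set X} (hA : ∀ i, IsClosed (A i)) {j : ι} {x : X}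
    (hxj : x ∈ frontier (A j)) (hx : x ∈ interior (⋃ i, A i)) : ∃ i, i ≠ j ∧ x ∈ A i := by
  by_contra! hnot
  let U : Set X := interior (⋃ i, A i) ∩ ⋂ i : {i // i ≠ j}, (A i)ᶜ
  have hU : IsOpen U :=
    isOpen_interior.inter (isOpen_iInter_of_finite fun i ↦ (hA i).isOpen_compl)
  have hUA : U ⊆ A j := by
    rintro y ⟨hy, hyj⟩
    obtain ⟨i, hi⟩ := mem_iUnion.1 (interior_subset hy)
    obtain rfl : i = j := by
      by_contra hij
      exact mem_iInter.1 hyj ⟨i, hij⟩ hi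
    exact hi
  exact hxj.2 (interior_maximal hUA hU ⟨hx, mem_iInter.2 fun i ↦ hnot i i.2⟩)

theorem finite_setOf_quadratic_eq_zero {K : Type*} [CommRing K] [IsDomain K] {a b c : K}
    (h : a ≠ 0 ∨ b ≠ 0 ∨ c ≠ 0) : {t : K | a * t ^ 2 + b * t + c = 0}.Finite := by
  let p : Polynomial K := .C a * .X ^ 2 + .C b * .X + .C c
  have hp : p ≠ 0 := fun hp ↦ by
    have ha : p.coeff 2 = a := by simp [p]
    have hb : p.coeff 1 = b := by simp [p]
    have hc : p.coeff 0 = c := by simp [p]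
    simp [← ha, ← hb, ← hc, hp] at h
  simpa [p, Polynomial.IsRoot] using Polynomial.finite_setOfPred_isRoot hp

theorem exists_dilationEquiv_image_eq {V W : Type*} [SeminormedAddCommGroup V]
    [SeminormedAddCommGroup W] {S : Set V} {T : Set W}
    (h : ∃ (f : V → W) (α : ℝ), f.Bijective ∧ 0 < α ∧
      (∀ x y, ‖f x - f y‖ = α * ‖x - y‖) ∧ f '' S = T) :
    ∃ e : V ≃ᵈ W, e '' S = T := by
  obtain ⟨f, α, hbij, hα, hf, himage⟩ := h
  lift α to NNReal using hα.le
  let dil : V →ᵈ W := Dilation.mkOfDistEq f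
    ⟨α, (NNReal.coe_pos.1 hα).ne', by simpa only [dist_eq_norm] using hf⟩
  exact ⟨⟨Equiv.ofBijective f hbij, dil.edist_eq'⟩, himage⟩

section Affine

variable {V W : Type*} [AddCommGroup V] [Module ℝ V] [AddCommGroup W] [Module ℝ W]

/-- Subsets of a real vector space that are covered by finitely many affine hyperplanes, each
encoded as the zero set of a nonconstant affine function. These are the sets that are negligible
compared with a sphere. -/
def IsHyperplaneCovered (S : Set V) : Prop :=
  ∃ Φ : Set (V →ᵃ[ℝ] ℝ), Φ.Finite ∧ (∀ φ ∈ Φ, φ.linear ≠ 0) ∧ ∀ x ∈ S, ∃ φ ∈ Φ, φ x = 0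

namespace IsHyperplaneCovered

theorem mono {S T : Set V} (hT : IsHyperplaneCovered T) (hST : S ⊆ T) : IsHyperplaneCovered S := by
  obtain ⟨Φ, hfin, hlin, hcov⟩ := hT
  exact ⟨Φ, hfin, hlin, fun x hx ↦ hcov x (hST hx)⟩

theorem iUnion {ι : Type*} [Finite ι] {S : ι → Set V} (hS : ∀ i, IsHyperplaneCovered (S i)) :
    IsHyperplaneCovered (⋃ i, S i) := by
  choose Φ hfin hlin hcov using hS
  refine ⟨⋃ i, Φ i, finite_iUnion hfin, fun φ hφ ↦ ?_, fun x hx ↦ ?_⟩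
  · obtain ⟨i, hi⟩ := mem_iUnion.1 hφ
    exact hlin i φ hi
  · obtain ⟨i, hi⟩ := mem_iUnion.1 hx
    obtain ⟨φ, hφ, hφx⟩ := hcov i x hi
    exact ⟨φ, mem_iUnion_of_mem i hφ, hφx⟩

theorem union {S T : Set V} (hS : IsHyperplaneCovered S) (hT : IsHyperplaneCovered T) :
    IsHyperplaneCovered (S ∪ T) := by
  rw [union_eq_iUnion]
  exact iUnion (Bool.forall_bool.2 ⟨hT, hS⟩)

theorem setOf_linearMap_eq {g : V →ₗ[ℝ] ℝ} (hg : g ≠ 0) (u : ℝ) :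
    IsHyperplaneCovered {x | g x = u} := by
  refine ⟨{g.toAffineMap - AffineMap.const ℝ V u}, finite_singleton _, ?_, fun x hx ↦ ?_⟩
  · simpa using hg
  · exact ⟨_, rfl, sub_eq_zero.2 hx⟩

theorem preimage {S : Set W} (hS : IsHyperplaneCovered S) (e : V ≃ᵃ[ℝ] W) :
    IsHyperplaneCovered (e ⁻¹' S) := by
  obtain ⟨Φ, hfin, hlin, hcov⟩ := hS
  refine ⟨(·.comp e.toAffineMap) '' Φ, hfin.image _, ?_, fun x hx ↦ ?_⟩
  · rintro _ ⟨φ, hφ, rfl⟩ hzero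
    refine hlin φ hφ (LinearMap.ext fun v ↦ ?_)
    simpa using LinearMap.congr_fun hzero (e.linear.symm v)
  · obtain ⟨φ, hφ, hφx⟩ := hcov (e x) hx
    exact ⟨_, mem_image_of_mem _ hφ, hφx⟩

end IsHyperplaneCovered

end Affine

section Similarity

variable {V W : Type*} [NormedAddCommGroup V] [NormedSpace ℝ V] [NormedAddCommGroup W]
  [NormedSpace ℝ W]

/-- Rescaling turns a similarity into an isometry, which is affine by the Mazur-Ulam theorem. -/
theorem exists_affineEquiv_coe_eq_dilationEquiv (f : V ≃ᵈ W) : ∃ e : V ≃ᵃ[ℝ] W, ⇑e = f := by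
  have hk : (Dilation.ratio f : ℝ) ≠ 0 := NNReal.coe_ne_zero.2 (Dilation.ratio_ne_zero f)
  let scale : V ≃ₗ[ℝ] V := LinearEquiv.smulOfNeZero ℝ V (Dilation.ratio f : ℝ) hk
  have hisom : Isometry (f ∘ scale.symm) := Isometry.of_dist_eq fun x y ↦ by
    calc dist (f (scale.symm x)) (f (scale.symm y))
        = Dilation.ratio f * dist (scale.symm x) (scale.symm y) := Dilation.dist_eq f _ _
      _ = dist (scale (scale.symm x)) (scale (scale.symm y)) := by
        simp [scale, dist_smul₀]
      _ = dist x y := by simp only [LinearEquiv.apply_symm_apply]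
  let g : V ≃ᵢ W := ⟨scale.symm.toEquiv.trans f.toEquiv, hisom⟩
  refine ⟨scale.toAffineEquiv.trans g.toRealAffineIsometryEquiv.toAffineEquiv, funext fun x ↦ ?_⟩
  exact congrArg f (scale.symm_apply_apply x)

theorem IsHyperplaneCovered.preimage_dilationEquiv {S : Set W} (hS : IsHyperplaneCovered S)
    (f : V ≃ᵈ W) : IsHyperplaneCovered (f ⁻¹' S) := by
  obtain ⟨e, he⟩ := exists_affineEquiv_coe_eq_dilationEquiv f
  exact he ▸ hS.preimage e

end Similarity

section Separation

variable {V : Type*} [NormedAddCommGroup V] [NormedSpace ℝ V]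

theorem isHyperplaneCovered_inter_of_disjoint_interior {A B : Set V} (hA : Convex ℝ A)
    (hB : Convex ℝ B) (hAint : (interior A).Nonempty) (hBint : (interior B).Nonempty)
    (hdisj : Disjoint (interior A) (interior B)) : IsHyperplaneCovered (A ∩ B) := by
  have hB_subset : B ⊆ closure (interior B) := by
    rw [hB.closure_interior_eq_closure_of_nonempty_interior hBint]
    exact subset_closure
  have hdisj' : Disjoint (interior A) B :=
    (hdisj.closure_right isOpen_interior).mono_right hB_subset
  obtain ⟨g, u, hg, hgA, hgB⟩ := geometric_hahn_banach_of_nonempty_interior hA hB hdisj' hAint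
    (hBint.mono interior_subset)
  have hg' : (g : V →ₗ[ℝ] ℝ) ≠ 0 := ContinuousLinearMap.coe_injective.ne hg
  exact (IsHyperplaneCovered.setOf_linearMap_eq hg' u).mono fun x hx ↦
    (hgA x hx.1).antisymm (hgB x hx.2)

theorem isHyperplaneCovered_frontier_inter_interior_iUnion {ι : Type*} [Finite ι] {A : ι → Set V}
    (hclosed : ∀ i, IsClosed (A i)) (hconvex : ∀ i, Convex ℝ (A i))
    (hint : ∀ i, (interior (A i)).Nonempty)
    (hdisj : Pairwise fun i j ↦ Disjoint (interior (A i)) (interior (A j))) (j : ι) :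
    IsHyperplaneCovered (frontier (A j) ∩ interior (⋃ i, A i)) := by
  have hcov : IsHyperplaneCovered (⋃ i : {i // i ≠ j}, A i ∩ A j) :=
    IsHyperplaneCovered.iUnion fun i ↦ isHyperplaneCovered_inter_of_disjoint_interior
      (hconvex i) (hconvex j) (hint i) (hint j) (hdisj i.2)
  refine hcov.mono fun x hx ↦ ?_
  obtain ⟨i, hij, hxi⟩ := exists_ne_mem_of_mem_frontier_of_mem_interior_iUnion hclosed hx.1 hx.2
  exact mem_iUnion.2 ⟨⟨i, hij⟩, hxi, (hclosed j).frontier_subset hx.1⟩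

end Separation

section Sphere

variable {V : Type*} [NormedAddCommGroup V] [InnerProductSpace ℝ V]

theorem isHyperplaneCovered_sphere_inter_sphere {a b : V} (hab : a ≠ b) (r s : ℝ) :
    IsHyperplaneCovered (sphere a r ∩ sphere b s) := by
  have hg : innerₗ V (b - a) ≠ 0 := fun h ↦
    hab (sub_eq_zero.1 (inner_self_eq_zero.1 (LinearMap.congr_fun h (b - a)))).symm
  refine (IsHyperplaneCovered.setOf_linearMap_eq hg
    ((r ^ 2 - s ^ 2 + ‖b‖ ^ 2 - ‖a‖ ^ 2) / 2)).mono fun x ⟨hxa, hxb⟩ ↦ ?_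
  rw [mem_sphere_iff_norm] at hxa hxb
  have hr := norm_sub_sq_real x a
  have hs := norm_sub_sq_real x b
  rw [hxa] at hr
  rw [hxb] at hs
  change ⟪b - a, x⟫ = _
  rw [real_inner_comm, inner_sub_right]
  linarith

/-- The point with parameter `t` in the rational parametrisation of the circle with centre `c`
and orthogonal radii `x` and `w`. It misses only the point `c - x`, and turns the incidence of the
circle with a hyperplane into a quadratic equation in `t`. -/
noncomputable def rationalCircle (c x w : V) (t : ℝ) : V :=
  c + (1 + t ^ 2)⁻¹ • ((1 - t ^ 2) • x + (2 * t) • w)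

theorem rationalCircle_mem_sphere (c : V) {x w : V} (horth : ⟪x, w⟫ = 0) (hnorm : ‖w‖ = ‖x‖)
    (t : ℝ) : rationalCircle c x w t ∈ sphere c ‖x‖ := by
  have hpos : 0 < 1 + t ^ 2 := by positivity
  have hsq : ‖(1 - t ^ 2) • x + (2 * t) • w‖ ^ 2 = ((1 + t ^ 2) * ‖x‖) ^ 2 := by
    rw [norm_add_sq_real, real_inner_smul_left, real_inner_smul_right, horth, norm_smul,
      norm_smul, hnorm, mul_pow, mul_pow, Real.norm_eq_abs, Real.norm_eq_abs, sq_abs, sq_abs]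
    ring
  have hlen : ‖(1 - t ^ 2) • x + (2 * t) • w‖ = (1 + t ^ 2) * ‖x‖ :=
    (pow_left_inj₀ (norm_nonneg _) (by positivity) two_ne_zero).1 hsq
  rw [mem_sphere_iff_norm, rationalCircle, add_sub_cancel_left, norm_smul, hlen, norm_inv,
    Real.norm_of_nonneg hpos.le, inv_mul_cancel_left₀ hpos.ne']

theorem finite_setOf_affineMap_rationalCircle_eq_zero {φ : V →ᵃ[ℝ] ℝ} {x : V}
    (hx : φ.linear x ≠ 0) (c w : V) : {t | φ (rationalCircle c x w t) = 0}.Finite := by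
  have hcoeff : φ c - φ.linear x ≠ 0 ∨ 2 * φ.linear w ≠ 0 ∨ φ c + φ.linear x ≠ 0 := by
    by_contra! h
    exact hx (by linarith [h.1, h.2.2])
  refine (finite_setOf_quadratic_eq_zero hcoeff).subset fun t ht ↦ ?_
  have heval : φ (rationalCircle c x w t) =
      (1 + t ^ 2)⁻¹ * ((1 - t ^ 2) * φ.linear x + 2 * t * φ.linear w) + φ c := by
    rw [rationalCircle, add_comm, ← vadd_eq_add, φ.map_vadd]
    simp only [map_smul, map_add, smul_eq_mul, vadd_eq_add]
  have hzero : (1 + t ^ 2)⁻¹ * ((1 - t ^ 2) * φ.linear x + 2 * t * φ.linear w) + φ c = 0 :=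
    heval.symm.trans ht
  field_simp at hzero
  change (φ c - φ.linear x) * t ^ 2 + 2 * φ.linear w * t + (φ c + φ.linear x) = 0
  linarith

theorem exists_inner_eq_zero_norm_eq (hV : 1 < Module.rank ℝ V) (x : V) :
    ∃ w : V, ⟪x, w⟫ = 0 ∧ ‖w‖ = ‖x‖ := by
  have hne_top : ℝ ∙ x ≠ ⊤ := fun htop ↦ hV.not_ge <| by
    calc Module.rank ℝ V = Module.rank ℝ (ℝ ∙ x) := by rw [htop, rank_top]
      _ ≤ Cardinal.mk ({x} : Set V) := rank_span_le _
      _ = 1 := Cardinal.mk_singleton x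
  obtain ⟨v, hv, hv0⟩ := Submodule.exists_mem_ne_zero_of_ne_bot
    (mt Submodule.orthogonal_eq_bot_iff.1 hne_top)
  refine ⟨(‖x‖ / ‖v‖) • v, ?_, ?_⟩
  · rw [real_inner_smul_right, Submodule.mem_orthogonal_singleton_iff_inner_right.1 hv, mul_zero]
  · rw [norm_smul, norm_div, norm_norm, norm_norm, div_mul_cancel₀ _ (norm_ne_zero_iff.2 hv0)]

theorem not_isHyperplaneCovered_sphere (hV : 1 < Module.rank ℝ V) (c : V) {r : ℝ} (hr : 0 < r) :
    ¬ IsHyperplaneCovered (sphere c r) := by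
  rintro ⟨Φ, hfin, hlin, hcov⟩
  have : Finite Φ := hfin
  have : Nontrivial V := rank_pos_iff_nontrivial.1 (zero_lt_one.trans hV)
  obtain ⟨v, hv⟩ : ∃ v : V, ∀ φ : Φ, φ.1.linear v ≠ 0 :=
    Dual.exists_forall_ne_zero_of_forall_exists (fun φ : Φ ↦ φ.1.linear) fun φ ↦
      DFunLike.exists_ne (hlin φ φ.2)
  have hv0 : v ≠ 0 := by
    obtain ⟨y, hy⟩ := (NormedSpace.sphere_nonempty (x := c)).2 hr.le
    obtain ⟨φ, hφ, -⟩ := hcov y hy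
    rintro rfl
    exact hv ⟨φ, hφ⟩ (map_zero _)
  let x : V := (r / ‖v‖) • v
  have hxr : ‖x‖ = r := by
    rw [norm_smul, norm_div, norm_norm, Real.norm_of_nonneg hr.le,
      div_mul_cancel₀ _ (norm_ne_zero_iff.2 hv0)]
  have hx (φ : Φ) : φ.1.linear x ≠ 0 := by
    rw [map_smul]
    exact smul_ne_zero (div_pos hr (norm_pos_iff.2 hv0)).ne' (hv φ)
  obtain ⟨w, horth, hnorm⟩ := exists_inner_eq_zero_norm_eq hV x
  obtain ⟨t, ht⟩ := (finite_iUnion fun φ : Φ ↦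
    finite_setOf_affineMap_rationalCircle_eq_zero (hx φ) c w).exists_notMem
  obtain ⟨φ, hφ, hzero⟩ := hcov _ (hxr ▸ rationalCircle_mem_sphere c horth hnorm t)
  exact ht (mem_iUnion.2 ⟨⟨φ, hφ⟩, hzero⟩)

end Sphere

section Dissection

variable {V ι : Type*} [NormedAddCommGroup V] [InnerProductSpace ℝ V] [Finite ι] {A : ι → Set V}
  {c : V} {r : ℝ}

theorem isHyperplaneCovered_inter_sphere_of_map_center_ne (hr : r ≠ 0)
    (hclosed : ∀ i, IsClosed (A i)) (hconvex : ∀ i, Convex ℝ (A i))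
    (hint : ∀ i, (interior (A i)).Nonempty) (hcover : closedBall c r = ⋃ i, A i)
    (hdisj : Pairwise fun i j ↦ Disjoint (interior (A i)) (interior (A j)))
    {i j : ι} {f : V ≃ᵈ V} (hf : f '' A i = A j) (hfc : f c ≠ c) :
    IsHyperplaneCovered (A i ∩ sphere c r) := by
  have hsub (k : ι) : A k ⊆ closedBall c r := hcover ▸ subset_iUnion A k
  have hball : interior (⋃ k, A k) = ball c r := by rw [← hcover, interior_closedBall c hr]
  have himage : IsHyperplaneCovered
      (frontier (A j) ∩ ball c r ∪ sphere (f c) (Dilation.ratio f * r) ∩ sphere c r) :=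
    (hball ▸ isHyperplaneCovered_frontier_inter_interior_iUnion hclosed hconvex hint hdisj j).union
      (isHyperplaneCovered_sphere_inter_sphere hfc _ _)
  refine (himage.preimage_dilationEquiv f).mono fun x ⟨hxA, hxc⟩ ↦ ?_
  have hx_frontier : x ∈ frontier (A i) := by
    refine ⟨subset_closure hxA, fun hx ↦ ?_⟩
    have : x ∈ ball c r := interior_closedBall c hr ▸ interior_mono (hsub i) hx
    exact (mem_ball.1 this).ne hxc
  have hfx_frontier : f x ∈ frontier (A j) := by
    rw [← hf, ← f.coe_toHomeomorph, ← f.toHomeomorph.image_frontier]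
    exact mem_image_of_mem _ hx_frontier
  have hfx_sphere : f x ∈ sphere (f c) (Dilation.ratio f * r) := by
    rw [mem_sphere, Dilation.dist_eq, mem_sphere.1 hxc]
  rcases (mem_closedBall.1 (hsub j (hf ▸ mem_image_of_mem f hxA))).lt_or_eq with hlt | heq
  · exact Or.inl ⟨hfx_frontier, hlt⟩
  · exact Or.inr ⟨hfx_sphere, heq⟩

theorem no_convex_similar_dissection_center_in_one_general [Nontrivial ι]
    (hV : 1 < Module.rank ℝ V) (hr : 0 < r)
    (hclosed : ∀ i, IsClosed (A i)) (hconvex : ∀ i, Convex ℝ (A i))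
    (hcover : closedBall c r = ⋃ i, A i)
    (hdisj : Pairwise fun i j ↦ Disjoint (interior (A i)) (interior (A j)))
    (hsim : ∀ i j, ∃ f : V ≃ᵈ V, f '' A i = A j) (i : ι) : c ∉ interior (A i) := by
  intro hc
  choose f hf using hsim
  have hint (j : ι) : (interior (A j)).Nonempty :=
    ⟨f i j c, (map_mem_interior_iff_of_image_eq (f := (f i j).toHomeomorph) (hf i j)).2 hc⟩
  obtain ⟨k, hk⟩ : ∃ k, ∀ j, f k j c = c := by
    by_contra! hmove
    choose j hj using hmove
    have hparts : IsHyperplaneCovered (⋃ k, A k ∩ sphere c r) := .iUnion fun k ↦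
      isHyperplaneCovered_inter_sphere_of_map_center_ne hr.ne' hclosed hconvex hint hcover hdisj
        (hf k (j k)) (hj k)
    rw [← iUnion_inter, ← hcover, inter_eq_right.2 sphere_subset_closedBall] at hparts
    exact not_isHyperplaneCovered_sphere hV c hr hparts
  have hiff (j : ι) : c ∈ interior (A j) ↔ c ∈ interior (A k) := by
    simpa only [DilationEquiv.coe_toHomeomorph, hk j] using
      map_mem_interior_iff_of_image_eq (f := (f k j).toHomeomorph) (hf k j) (x := c)
  obtain ⟨j, hji⟩ := exists_ne i
  exact disjoint_left.1 (hdisj hji) ((hiff j).2 ((hiff i).1 hc)) hc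

end Dissection

/-- The closed unit disk `K` in the Euclidean plane `ℝ²` cannot be
dissected into `n ≥ 2` closed, convex, pairwise similar parts (with pairwise disjoint
interiors) in such a way that the centre lies in the interior of exactly one part. -/
theorem no_convex_similar_dissection_center_in_one
    (n : ℕ) (hn : 2 ≤ n)
    (A : Fin n → Set (EuclideanSpace ℝ (Fin 2)))
    (hclosed : ∀ i, IsClosed (A i))
    (hconvex : ∀ i, Convex ℝ (A i))
    (hcover : Metric.closedBall (0 : EuclideanSpace ℝ (Fin 2)) 1 = ⋃ i, A i)
    (hdisj : ∀ i j, i ≠ j → interior (A i) ∩ interior (A j) = ∅)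
    (hsim : ∀ i j, ∃ (f : EuclideanSpace ℝ (Fin 2) → EuclideanSpace ℝ (Fin 2)) (α : ℝ),
      Function.Bijective f ∧ 0 < α ∧
      (∀ x y, ‖f x - f y‖ = α * ‖x - y‖) ∧ f '' A i = A j) :
    ¬ ∃! i : Fin n, (0 : EuclideanSpace ℝ (Fin 2)) ∈ interior (A i) := by
  have : Nontrivial (Fin n) := Fin.nontrivial_iff_two_le.2 hn
  rintro ⟨i, hi, -⟩
  exact no_convex_similar_dissection_center_in_one_general (by simp [← finrank_eq_rank]) one_pos
    hclosed hconvex hcover (fun i j hij ↦ disjoint_iff_inter_eq_empty.2 (hdisj i j hij))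
    (fun i j ↦ exists_dilationEquiv_image_eq (hsim i j)) i hi
end
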